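/- Let n ≥ 1, p ∈ (0,∞), and let 𝒫_{1/2} denote the set of projections in M_{2n}(ℂ) of normalized trace 1/2. Let φ : 𝒫_{1/2} → 𝒫_{1/2} be a surjective L^p-isometry. Then there exists a unitary W ∈ M_{2n}(ℂ) such that one of the following four forms holds for every P ∈ 𝒫_{1/2}: φ(P) = W P Wᴴ, φ(P) = W Pᵀ Wᴴ, φ(P) = I − W P Wᴴ, or φ(P) = I − W Pᵀ Wᴴ. (These forms encode φ(P) = φ'(P) or φ(P) = I − φ'(P) with φ' a *-automorphism or *-anti-automorphism of M_{2n}(ℂ).) -/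

import Mathlib

open Matrix
open scoped ComplexOrder

/-- The normalized trace `L^p`-(quasi-)norm `(τ(|A|^p))^{1/p}` of a complex matrix,
computed via the eigenvalues of `Aᴴ * A`: the eigenvalues of `|A|^p` are the
`(p/2)`-th powers of those of `Aᴴ * A`, and the trace of a Hermitian matrix is the
sum of its eigenvalues. -/
noncomputable def lpnorm {m : Type*} [Fintype m] [DecidableEq m] (p : ℝ)
    (A : Matrix m m ℂ) : ℝ :=
  ((∑ i, ((Matrix.posSemidef_conjTranspose_mul_self A).isHermitian.eigenvalues i) ^ (p / 2)) /
      (Fintype.card m : ℝ)) ^ (1 / p)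

/-- The `ℓ² → ℓ²` operator norm of a complex matrix. -/
noncomputable def l2opNorm {m : Type*} [Fintype m] [DecidableEq m]
    (A : Matrix m m ℂ) : ℝ :=
  ‖Matrix.toEuclideanCLM (𝕜 := ℂ) A‖

set_option linter.unusedSectionVars false

namespace HalfProj

section Integral

open MeasureTheory Set

theorem integrableOn_abs_sin_rpow {p z : ℝ} (hz : 0 < z) (hzp : z < p) (a : ℝ) :
    IntegrableOn (fun t => |Real.sin (t * a)| ^ p * t ^ (-z - 1)) (Ioi 0) := by
  have hp : 0 < p := hz.trans hzp
  have hm : Measurable (fun t : ℝ => |Real.sin (t * a)| ^ p * t ^ (-z - 1)) := by fun_prop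
  rw [← Ioc_union_Ioi_eq_Ioi zero_le_one]
  refine IntegrableOn.union ?_ ?_
  · have h1 : IntegrableOn (fun t : ℝ => |a| ^ p * t ^ (p - z - 1)) (Ioc 0 1) := by
      have := (intervalIntegral.intervalIntegrable_rpow' (a := 0) (b := 1)
        (r := p - z - 1) (by linarith)).const_mul (|a| ^ p)
      exact (intervalIntegrable_iff_integrableOn_Ioc_of_le zero_le_one).mp this
    refine Integrable.mono' h1 hm.aestronglyMeasurable ?_
    refine (ae_restrict_iff' measurableSet_Ioc).mpr (Filter.Eventually.of_forall fun t ht => ?_)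
    have ht0 : 0 < t := ht.1
    rw [Real.norm_of_nonneg (by positivity)]
    have h2 : |Real.sin (t * a)| ^ p ≤ (t * |a|) ^ p := by
      refine Real.rpow_le_rpow (abs_nonneg _) ?_ hp.le
      calc _ ≤ |t * a| := Real.abs_sin_le_abs
        _ = _ := by rw [abs_mul, abs_of_pos ht0]
    calc _ ≤ (t * |a|) ^ p * t ^ (-z - 1) := by gcongr
      _ = |a| ^ p * (t ^ p * t ^ (-z - 1)) := by
        rw [Real.mul_rpow ht0.le (abs_nonneg _)]; ring
      _ = _ := by rw [← Real.rpow_add ht0]; ring_nf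
  · refine Integrable.mono' (integrableOn_Ioi_rpow_of_lt (a := -z - 1) (by linarith) one_pos)
      hm.aestronglyMeasurable ?_
    refine (ae_restrict_iff' measurableSet_Ioi).mpr (Filter.Eventually.of_forall fun t ht => ?_)
    have ht0 : (0 : ℝ) < t := one_pos.trans ht
    rw [Real.norm_of_nonneg (by positivity)]
    calc _ ≤ (1 : ℝ) ^ p * t ^ (-z - 1) := by
          gcongr
          exact Real.abs_sin_le_one _
      _ = _ := by simp

theorem integral_abs_sin_rpow {p z : ℝ} (hz : 0 < z) (hzp : z < p) (a : ℝ) :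
    ∫ t in Ioi (0 : ℝ), |Real.sin (t * a)| ^ p * t ^ (-z - 1)
      = |a| ^ z * ∫ t in Ioi (0 : ℝ), |Real.sin t| ^ p * t ^ (-z - 1) := by
  have hp : 0 < p := hz.trans hzp
  rcases eq_or_ne a 0 with rfl | ha
  · simp [Real.zero_rpow hz.ne', Real.zero_rpow hp.ne']
  have ha' : 0 < |a| := abs_pos.mpr ha
  have h := integral_comp_mul_left_Ioi (fun t : ℝ => |Real.sin t| ^ p * t ^ (-z - 1)) 0 ha'
  rw [mul_zero, smul_eq_mul] at h
  have e : ∫ t in Ioi (0 : ℝ), |Real.sin (|a| * t)| ^ p * (|a| * t) ^ (-z - 1)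
      = |a| ^ (-z - 1) * ∫ t in Ioi (0 : ℝ), |Real.sin (t * a)| ^ p * t ^ (-z - 1) := by
    rw [← integral_const_mul]
    refine setIntegral_congr_fun measurableSet_Ioi fun t ht => ?_
    have ht0 : (0 : ℝ) < t := ht
    have : |Real.sin (|a| * t)| = |Real.sin (t * a)| := by
      rcases abs_choice a with h | h <;> rw [h]
      · rw [mul_comm]
      · rw [neg_mul, Real.sin_neg, abs_neg, mul_comm]
    simp only [this]
    rw [Real.mul_rpow ha'.le ht0.le]; ring
  rw [e] at h
  have h2 : |a| ^ (-z - 1) = |a|⁻¹ * (|a| ^ z)⁻¹ := by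
    rw [Real.rpow_sub ha', Real.rpow_neg ha'.le, Real.rpow_one]; field_simp
  rw [h2, mul_assoc] at h
  have h3 := mul_left_cancel₀ (inv_ne_zero ha'.ne') h
  rw [← h3, ← mul_assoc, mul_inv_cancel₀ (Real.rpow_pos_of_pos ha' z).ne', one_mul]

theorem integral_abs_sin_rpow_pos {p z : ℝ} (hz : 0 < z) (hzp : z < p) :
    0 < ∫ t in Ioi (0 : ℝ), |Real.sin t| ^ p * t ^ (-z - 1) := by
  have hi := integrableOn_abs_sin_rpow hz hzp 1
  simp only [mul_one] at hi
  rw [setIntegral_pos_iff_support_of_nonneg_ae _ hi]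
  · refine lt_of_lt_of_le (b := volume (Ioo (0 : ℝ) 1)) (by simp) (measure_mono fun t ht => ?_)
    refine ⟨?_, ht.1⟩
    have h1 : 0 < Real.sin t := Real.sin_pos_of_pos_of_lt_pi ht.1
      (by linarith [ht.2, Real.pi_gt_three])
    have h2 : 0 < t := ht.1
    simp only [Function.mem_support]
    positivity
  · refine (ae_restrict_iff' measurableSet_Ioi).mpr (Filter.Eventually.of_forall fun t ht => ?_)
    have h2 : (0 : ℝ) < t := ht
    simp only [Pi.zero_apply]
    positivity

variable {m : Type*} [Fintype m]

theorem sum_rpow_eq {p : ℝ} {a b : m → ℝ}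
    (h : ∀ t : ℝ, 0 < t → ∑ i, |Real.sin (t * a i)| ^ p = ∑ i, |Real.sin (t * b i)| ^ p)
    {z : ℝ} (hz : 0 < z) (hzp : z < p) : ∑ i, |a i| ^ z = ∑ i, |b i| ^ z := by
  have key : ∀ c : m → ℝ, ∫ t in Ioi (0 : ℝ), (∑ i, |Real.sin (t * c i)| ^ p) * t ^ (-z - 1)
      = (∑ i, |c i| ^ z) * ∫ t in Ioi (0 : ℝ), |Real.sin t| ^ p * t ^ (-z - 1) := fun c => by
    simp only [Finset.sum_mul]
    rw [integral_finsetSum _ fun i _ => integrableOn_abs_sin_rpow hz hzp (c i)]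
    exact Finset.sum_congr rfl fun i _ => integral_abs_sin_rpow hz hzp (c i)
  refine mul_right_cancel₀ (integral_abs_sin_rpow_pos hz hzp).ne' ?_
  rw [← key, ← key]
  exact setIntegral_congr_fun measurableSet_Ioi fun t ht => by simp only [h t ht]

theorem sum_pow_eq {p : ℝ} (hp : 0 < p) {a b : m → ℝ}
    (h : ∀ z : ℝ, 0 < z → z < p → ∑ i, |a i| ^ z = ∑ i, |b i| ^ z) {k : ℕ} (hk : k ≠ 0) :
    ∑ i, |a i| ^ k = ∑ i, |b i| ^ k := by
  classical
  let f : (m → ℝ) → ℝ → ℝ := fun c z => ∑ i, if c i = 0 then 0 else Real.exp (z * Real.log |c i|)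
  have hf : ∀ c z, z ≠ 0 → f c z = ∑ i, |c i| ^ z := fun c z hz =>
    Finset.sum_congr rfl fun i _ => by
      by_cases hc : c i = 0
      · simp [hc, Real.zero_rpow hz]
      · simp [hc, Real.rpow_def_of_pos (abs_pos.mpr hc), mul_comm]
  have han : ∀ c, AnalyticOnNhd ℝ (f c) univ := fun c => by
    refine Finset.analyticOnNhd_fun_sum _ fun i _ => ?_
    by_cases hc : c i = 0
    · simp only [hc, if_true]; exact analyticOnNhd_const
    · simp only [hc, if_false]
      exact (analyticOnNhd_id.mul analyticOnNhd_const).rexp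
  have heq : f a = f b := by
    refine (han a).eq_of_eventuallyEq (han b) (z₀ := p / 2) ?_
    filter_upwards [Ioo_mem_nhds (half_pos hp) (half_lt_self hp)] with z hz
    rw [hf _ _ hz.1.ne', hf _ _ hz.1.ne', h z hz.1 hz.2]
  have hk' : (k : ℝ) ≠ 0 := by exact_mod_cast hk
  have := congrFun heq k
  rw [hf _ _ hk', hf _ _ hk'] at this
  simpa using this

/-- The frequencies of `t ↦ ∑ |sin (t aᵢ)|^p` determine the spectral trace `∑ cos (2 aᵢ)`. -/
theorem sum_cos_eq {p : ℝ} (hp : 0 < p) {a b : m → ℝ}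
    (h : ∀ t : ℝ, 0 < t → ∑ i, |Real.sin (t * a i)| ^ p = ∑ i, |Real.sin (t * b i)| ^ p) :
    ∑ i, Real.cos (2 * a i) = ∑ i, Real.cos (2 * b i) := by
  have hs : ∀ c : m → ℝ, HasSum (fun k : ℕ => (-1) ^ k * 2 ^ (2 * k) / (2 * k).factorial *
      ∑ i, |c i| ^ (2 * k)) (∑ i, Real.cos (2 * c i)) := fun c => by
    have := hasSum_sum (s := Finset.univ) fun i (_ : i ∈ Finset.univ) => Real.hasSum_cos (2 * c i)
    convert this using 2 with k
    rw [Finset.mul_sum]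
    refine Finset.sum_congr rfl fun i _ => ?_
    rw [mul_pow, pow_mul |c i|, sq_abs, ← pow_mul]; ring
  refine (hs a).unique ?_
  convert hs b using 2 with k
  congr 1
  rcases Nat.eq_zero_or_pos k with rfl | hk
  · simp
  · exact sum_pow_eq hp (fun z hz hzp => sum_rpow_eq h hz hzp) (by omega)

end Integral

variable {m : Type*} [Fintype m] [DecidableEq m]

/-- The matrix with eigenvector matrix `V` and eigenvalues `d`. -/
def conjDiag (V : Matrix m m ℂ) (d : m → ℂ) : Matrix m m ℂ := V * diagonal d * Vᴴ

theorem conjDiag_mul {V : Matrix m m ℂ} (hV : Vᴴ * V = 1) (d e : m → ℂ) :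
    conjDiag V d * conjDiag V e = conjDiag V (fun i => d i * e i) := by
  calc _ = V * diagonal d * (Vᴴ * V) * diagonal e * Vᴴ := by
        simp only [conjDiag, Matrix.mul_assoc]
    _ = V * (diagonal d * diagonal e) * Vᴴ := by rw [hV, Matrix.mul_one]; simp only [Matrix.mul_assoc]
    _ = _ := by rw [diagonal_mul_diagonal, conjDiag]

theorem conjDiag_add (V : Matrix m m ℂ) (d e : m → ℂ) :
    conjDiag V d + conjDiag V e = conjDiag V (fun i => d i + e i) := by
  simp only [conjDiag, ← Matrix.add_mul, ← Matrix.mul_add, diagonal_add]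

theorem conjDiag_sub (V : Matrix m m ℂ) (d e : m → ℂ) :
    conjDiag V d - conjDiag V e = conjDiag V (fun i => d i - e i) := by
  simp only [conjDiag, ← Matrix.sub_mul, ← Matrix.mul_sub, diagonal_sub]

theorem conjDiag_smul (V : Matrix m m ℂ) (c : ℂ) (d : m → ℂ) :
    c • conjDiag V d = conjDiag V (fun i => c * d i) := by
  have : diagonal (fun i => c * d i) = c • diagonal d := by
    ext i j; by_cases h : i = j <;> simp [diagonal, h]
  simp only [conjDiag, this, Matrix.mul_smul, Matrix.smul_mul]

theorem conjDiag_const {V : Matrix m m ℂ} (hV : Vᴴ * V = 1) (c : ℂ) :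
    conjDiag V (fun _ => c) = c • 1 := by
  have : diagonal (fun _ : m => c) = c • (1 : Matrix m m ℂ) := by
    ext i j; by_cases h : i = j <;> simp [diagonal, h]
  rw [conjDiag, this, Matrix.mul_smul, Matrix.smul_mul, Matrix.mul_one, mul_eq_one_comm.mp hV]

theorem conjDiag_conjTranspose (V : Matrix m m ℂ) (d : m → ℂ) :
    (conjDiag V d)ᴴ = conjDiag V (fun i => star (d i)) := by
  simp only [conjDiag, conjTranspose_mul, conjTranspose_conjTranspose, diagonal_conjTranspose,
    Matrix.mul_assoc]
  rfl

theorem trace_conjDiag {V : Matrix m m ℂ} (hV : Vᴴ * V = 1) (d : m → ℂ) :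
    (conjDiag V d).trace = ∑ i, d i := by
  rw [conjDiag, trace_mul_comm, ← Matrix.mul_assoc, hV, Matrix.one_mul, trace_diagonal]

theorem conjDiag_injective {V : Matrix m m ℂ} (hV : Vᴴ * V = 1) {d e : m → ℂ}
    (h : conjDiag V d = conjDiag V e) : d = e := by
  have key : ∀ d, Vᴴ * conjDiag V d * V = diagonal d := fun d => by
    calc _ = (Vᴴ * V) * diagonal d * (Vᴴ * V) := by simp only [conjDiag, Matrix.mul_assoc]
      _ = _ := by rw [hV, Matrix.one_mul, Matrix.mul_one]
  have := key d
  rw [h, key e] at this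
  exact (diagonal_injective this).symm

theorem exists_conjDiag {A : Matrix m m ℂ} (hA : Aᴴ = A) :
    ∃ (V : Matrix m m ℂ) (a : m → ℝ), Vᴴ * V = 1 ∧ A = conjDiag V (fun i => (a i : ℂ)) := by
  have h : A.IsHermitian := hA
  refine ⟨h.eigenvectorUnitary, h.eigenvalues, ?_, ?_⟩
  · exact (Unitary.mem_iff.mp h.eigenvectorUnitary.2).1
  · conv_lhs => rw [h.spectral_theorem]
    rfl

/-- A matrix intertwining two diagonalizable matrices intertwines functions of them. -/
theorem conjDiag_intertwine {V X : Matrix m m ℂ} (hV : Vᴴ * V = 1) {d e f g : m → ℂ}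
    (h : X * conjDiag V d = conjDiag V e * X) (hfg : ∀ i j, d j = e i → f j = g i) :
    X * conjDiag V f = conjDiag V g * X := by
  have hV' : V * Vᴴ = 1 := mul_eq_one_comm.mp hV
  set Y := Vᴴ * X * V with hY
  have hX : X = V * Y * Vᴴ := by
    calc X = (V * Vᴴ) * X * (V * Vᴴ) := by rw [hV', Matrix.one_mul, Matrix.mul_one]
      _ = _ := by rw [hY]; simp only [Matrix.mul_assoc]
  have l : ∀ d, X * conjDiag V d = V * (Y * diagonal d) * Vᴴ := fun d => by
    calc _ = V * Y * (Vᴴ * V) * diagonal d * Vᴴ := by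
          rw [hX]; simp only [conjDiag, Matrix.mul_assoc]
      _ = _ := by rw [hV, Matrix.mul_one]; simp only [Matrix.mul_assoc]
  have r : ∀ d, conjDiag V d * X = V * (diagonal d * Y) * Vᴴ := fun d => by
    calc _ = V * diagonal d * (Vᴴ * V) * Y * Vᴴ := by
          rw [hX]; simp only [conjDiag, Matrix.mul_assoc]
      _ = _ := by rw [hV, Matrix.mul_one]; simp only [Matrix.mul_assoc]
  have c : ∀ Z, Vᴴ * (V * Z * Vᴴ) * V = Z := fun Z => by
    calc _ = (Vᴴ * V) * Z * (Vᴴ * V) := by simp only [Matrix.mul_assoc]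
      _ = _ := by rw [hV, Matrix.one_mul, Matrix.mul_one]
  have hde : Y * diagonal d = diagonal e * Y := by
    rw [← c (Y * diagonal d), ← c (diagonal e * Y), ← l, ← r, h]
  rw [l, r]
  congr 2
  ext i j
  have := congrFun (congrFun hde i) j
  rw [mul_diagonal, diagonal_mul] at this ⊢
  by_cases hij : Y i j = 0
  · simp [hij]
  · have h2 : d j = e i := mul_right_cancel₀ hij (by rw [mul_comm, this])
    rw [hfg i j h2, mul_comm]

/-- The sum of `f` over the real parts of the eigenvalues of `A`, with multiplicity. -/
noncomputable def specSum (f : ℝ → ℝ) (A : Matrix m m ℂ) : ℝ :=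
  (A.charpoly.roots.map fun z => f z.re).sum

theorem specSum_eigenvalues (f : ℝ → ℝ) {A : Matrix m m ℂ} (hA : A.IsHermitian) :
    ∑ i, f (hA.eigenvalues i) = specSum f A := by
  rw [specSum, hA.roots_charpoly_eq_eigenvalues, Multiset.map_map]
  rfl

theorem specSum_conj (f : ℝ → ℝ) {V W : Matrix m m ℂ} (h : W * V = 1) (A : Matrix m m ℂ) :
    specSum f (V * A * W) = specSum f A := by
  rw [specSum, specSum, charpoly_mul_comm, ← Matrix.mul_assoc, h, Matrix.one_mul]

theorem specSum_conjDiag (f : ℝ → ℝ) {V : Matrix m m ℂ} (hV : Vᴴ * V = 1) (a : m → ℝ) :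
    specSum f (conjDiag V fun i => (a i : ℂ)) = ∑ i, f (a i) := by
  rw [conjDiag, specSum_conj f hV, specSum, charpoly_diagonal, Polynomial.roots_prod]
  · simp
  · simp [Finset.prod_ne_zero_iff, Polynomial.X_sub_C_ne_zero]

/-- Traceless self-adjoint unitary matrices. -/
structure IsSym (S : Matrix m m ℂ) : Prop where
  herm : Sᴴ = S
  sq : S * S = 1
  tr : S.trace = 0

/-- The sum of the `p`-th powers of the singular values of `S - T`, for Hermitian `S`, `T`. -/
noncomputable def dp (p : ℝ) (S T : Matrix m m ℂ) : ℝ :=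
  specSum (fun x => x ^ (p / 2)) ((S - T) * (S - T))

/-- The squared Hilbert–Schmidt distance of Hermitian matrices. -/
noncomputable def hs (S T : Matrix m m ℂ) : ℝ := (((S - T) * (S - T)).trace).re

theorem dp_comm (p : ℝ) (S T : Matrix m m ℂ) : dp p S T = dp p T S := by
  rw [dp, dp, ← neg_sub T S, neg_mul_neg]

theorem hs_comm (S T : Matrix m m ℂ) : hs S T = hs T S := by
  rw [hs, hs, ← neg_sub T S, neg_mul_neg]

theorem trace_conjTranspose_mul_self_re (A : Matrix m m ℂ) :
    ((Aᴴ * A).trace).re = ∑ i, ∑ j, ‖A j i‖ ^ 2 := by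
  simp only [trace, diag_apply, mul_apply, conjTranspose_apply, Complex.re_sum]
  refine Finset.sum_congr rfl fun i _ => Finset.sum_congr rfl fun j _ => ?_
  rw [Complex.star_def, ← Complex.normSq_eq_conj_mul_self, Complex.ofReal_re,
    Complex.normSq_eq_norm_sq]

theorem trace_sq_nonneg {A : Matrix m m ℂ} (hA : Aᴴ = A) : 0 ≤ ((A * A).trace).re := by
  have := trace_conjTranspose_mul_self_re A
  rw [hA] at this
  rw [this]; positivity

theorem eq_zero_of_trace_sq {A : Matrix m m ℂ} (hA : Aᴴ = A) (h : ((A * A).trace).re = 0) :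
    A = 0 := by
  have := trace_conjTranspose_mul_self_re A
  rw [hA, h] at this
  ext i j
  have h1 := (Finset.sum_eq_zero_iff_of_nonneg (fun i _ => by positivity)).mp this.symm j
    (Finset.mem_univ _)
  have h2 := (Finset.sum_eq_zero_iff_of_nonneg (fun i _ => by positivity)).mp h1 i
    (Finset.mem_univ _)
  simpa using h2

theorem hs_triangle {S T R : Matrix m m ℂ} (hS : Sᴴ = S) (hT : Tᴴ = T) (hR : Rᴴ = R) :
    hs S R ≤ 2 * hs S T + 2 * hs T R := by
  have h := trace_sq_nonneg (A := (S - T) - (T - R)) (by simp [hS, hT, hR])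
  have e : ((S - R) * (S - R)).trace + (((S - T) - (T - R)) * ((S - T) - (T - R))).trace
      = 2 * ((S - T) * (S - T)).trace + 2 * ((T - R) * (T - R)).trace := by
    rw [← trace_add, show (2 : ℂ) = ((2 : ℕ) : ℂ) by norm_num, ← nsmul_eq_mul, ← nsmul_eq_mul,
      ← trace_smul, ← trace_smul, ← trace_add]
    congr 1
    noncomm_ring
  have := congrArg Complex.re e
  simp only [Complex.add_re, Complex.mul_re, Complex.re_ofNat, Complex.im_ofNat, zero_mul,
    sub_zero] at this
  unfold hs
  linarith

/-- Spectral decomposition of the square of a difference. -/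
theorem exists_diff_sq {S T : Matrix m m ℂ} (hS : Sᴴ = S) (hT : Tᴴ = T) :
    ∃ (V : Matrix m m ℂ) (a : m → ℝ), Vᴴ * V = 1 ∧ (∀ i, 0 ≤ a i) ∧
      (S - T) * (S - T) = conjDiag V (fun i => (a i : ℂ)) ∧
      (∀ i, a i ≤ hs S T) ∧ (hs S T = ∑ i, a i) ∧
      ∀ p, dp p S T = ∑ i, a i ^ (p / 2) := by
  obtain ⟨V, b, hV, h⟩ := exists_conjDiag (A := S - T) (by simp [hS, hT])
  have h2 : (S - T) * (S - T) = conjDiag V (fun i => ((b i * b i : ℝ) : ℂ)) := by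
    rw [h, conjDiag_mul hV]; simp
  have h3 : hs S T = ∑ i, b i * b i := by
    rw [hs, h2, trace_conjDiag hV, ← Complex.ofReal_sum, Complex.ofReal_re]
  refine ⟨V, fun i => b i * b i, hV, fun i => mul_self_nonneg _, h2, fun i => ?_, h3, fun p => ?_⟩
  · rw [h3]
    exact Finset.single_le_sum (f := fun i => b i * b i) (fun i _ => mul_self_nonneg _)
      (Finset.mem_univ i)
  · rw [dp, h2, specSum_conjDiag _ hV]

theorem dp_nonneg {S T : Matrix m m ℂ} (hS : Sᴴ = S) (hT : Tᴴ = T) (p : ℝ) : 0 ≤ dp p S T := by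
  obtain ⟨V, a, -, ha, -, -, -, h⟩ := exists_diff_sq hS hT
  rw [h]
  exact Finset.sum_nonneg fun i _ => Real.rpow_nonneg (ha i) _

theorem dp_le {S T : Matrix m m ℂ} (hS : Sᴴ = S) (hT : Tᴴ = T) {p : ℝ} (hp : 0 < p) :
    dp p S T ≤ Fintype.card m * hs S T ^ (p / 2) := by
  obtain ⟨V, a, -, ha, -, hle, -, h⟩ := exists_diff_sq hS hT
  rw [h]
  refine (Finset.sum_le_card_nsmul _ _ (hs S T ^ (p / 2)) fun i _ => ?_).trans (by simp)
  exact Real.rpow_le_rpow (ha i) (hle i) (by positivity)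

theorem hs_le {S T : Matrix m m ℂ} (hS : Sᴴ = S) (hT : Tᴴ = T) {p : ℝ} (hp : 0 < p) :
    hs S T ≤ Fintype.card m * dp p S T ^ (2 / p) := by
  obtain ⟨V, a, -, ha, -, -, hsum, h⟩ := exists_diff_sq hS hT
  rw [hsum]
  refine (Finset.sum_le_card_nsmul _ _ (dp p S T ^ (2 / p)) fun i _ => ?_).trans (by simp)
  have h1 : a i ^ (p / 2) ≤ dp p S T := by
    rw [h]
    exact Finset.single_le_sum (f := fun i => a i ^ (p / 2))
      (fun i _ => Real.rpow_nonneg (ha i) _) (Finset.mem_univ i)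
  calc a i = (a i ^ (p / 2)) ^ (2 / p) := by
        rw [← Real.rpow_mul (ha i)]
        rw [show p / 2 * (2 / p) = 1 by field_simp, Real.rpow_one]
    _ ≤ _ := Real.rpow_le_rpow (Real.rpow_nonneg (ha i) _) h1 (by positivity)

theorem eq_of_hs_eq_zero {S T : Matrix m m ℂ} (hS : Sᴴ = S) (hT : Tᴴ = T) (h : hs S T = 0) :
    S = T :=
  sub_eq_zero.mp (eq_zero_of_trace_sq (by simp [hS, hT]) h)

theorem IsSym.conj {c x : Matrix m m ℂ} (hc : IsSym c) (hx : IsSym x) : IsSym (c * x * c) where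
  herm := by simp [hc.herm, hx.herm, Matrix.mul_assoc]
  sq := by
    calc _ = c * (x * (c * c) * x) * c := by simp only [Matrix.mul_assoc]
      _ = 1 := by rw [hc.sq, Matrix.mul_one, hx.sq, Matrix.mul_one, hc.sq]
  tr := by rw [trace_mul_comm, ← Matrix.mul_assoc, hc.sq, Matrix.one_mul, hx.tr]

theorem IsSym.conj_conj {c : Matrix m m ℂ} (hc : IsSym c) (x : Matrix m m ℂ) :
    c * (c * x * c) * c = x := by
  calc _ = (c * c) * x * (c * c) := by simp only [Matrix.mul_assoc]
    _ = x := by rw [hc.sq, Matrix.mul_one, Matrix.one_mul]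

theorem dp_conj (p : ℝ) {c : Matrix m m ℂ} (hc : IsSym c) (x y : Matrix m m ℂ) :
    dp p (c * x * c) (c * y * c) = dp p x y := by
  have : (c * x * c - c * y * c) * (c * x * c - c * y * c) = c * ((x - y) * (x - y)) * c := by
    calc _ = c * (x - y) * (c * c) * (x - y) * c := by noncomm_ring
      _ = _ := by rw [hc.sq, Matrix.mul_one]; simp only [Matrix.mul_assoc]
  rw [dp, this, specSum_conj _ hc.sq, dp]

/-- Near `c`, the symmetry at `c` moves points by a definite multiple of their distance to `c`. -/
theorem dp_expand {p : ℝ} (hp : 0 < p) {c x : Matrix m m ℂ} (hc : IsSym c) (hx : IsSym x)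
    (h : hs x c ≤ 1) : (3 : ℝ) ^ (p / 2) * dp p x c ≤ dp p x (c * x * c) := by
  obtain ⟨V, a, hV, ha, hsq, hle, -, hd⟩ := exists_diff_sq hx.herm hc.herm
  have e : (x - c * x * c) * (x - c * x * c)
      = conjDiag V (fun i => ((4 * a i - a i * a i : ℝ) : ℂ)) := by
    have h1 : (x - c * x * c) * (x - c * x * c)
        = (4 : ℂ) • ((x - c) * (x - c)) - ((x - c) * (x - c)) * ((x - c) * (x - c)) := by
      have h2 : (x - c) * (x - c) = (2 : ℂ) • 1 - x * c - c * x := by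
        calc _ = x * x - x * c - c * x + c * c := by noncomm_ring
          _ = _ := by rw [hx.sq, hc.sq, two_smul]; abel
      have l : (x - c * x * c) * (x - c * x * c) = (2 : ℂ) • 1 - x * c * x * c - c * x * c * x := by
        calc _ = x * x - x * c * x * c - c * x * c * x + c * x * (c * c) * x * c := by noncomm_ring
          _ = _ := by
            rw [hx.sq, hc.sq, Matrix.mul_one, Matrix.mul_assoc c x x, hx.sq, Matrix.mul_one,
              hc.sq, two_smul]
            abel
      have r : (x * c + c * x) * (x * c + c * x) = (2 : ℂ) • 1 + x * c * x * c + c * x * c * x := by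
        calc _ = x * c * x * c + c * x * c * x + x * (c * c) * x + c * (x * x) * c := by noncomm_ring
          _ = _ := by
            rw [hx.sq, hc.sq, Matrix.mul_one, Matrix.mul_one, hx.sq, hc.sq, two_smul]
            abel
      rw [l, h2]
      have : ((2 : ℂ) • (1 : Matrix m m ℂ) - x * c - c * x) * ((2 : ℂ) • 1 - x * c - c * x)
          = (4 : ℂ) • 1 - (4 : ℂ) • (x * c + c * x) + (x * c + c * x) * (x * c + c * x) := by
        simp only [sub_mul, mul_sub, add_mul, mul_add, smul_mul_assoc, mul_smul_comm, one_mul, mul_one]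
        module
      rw [this, r]
      module
    rw [h1, hsq, conjDiag_mul hV, conjDiag_smul, conjDiag_sub]
    congr 1; ext i; push_cast; ring
  rw [hd, dp, e, specSum_conjDiag _ hV, Finset.mul_sum]
  refine Finset.sum_le_sum fun i _ => ?_
  rw [← Real.mul_rpow (by norm_num) (ha i)]
  refine Real.rpow_le_rpow (by have := ha i; positivity) ?_ (by positivity)
  have := (hle i).trans h
  nlinarith [ha i]

theorem cayley_eq_exp (a : ℝ) :
    (Complex.I - a) / (a + Complex.I) = Complex.exp (((2 * Real.arctan a : ℝ) : ℂ) * Complex.I) := by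
  have h1 : ((a : ℂ) + Complex.I) ≠ 0 := fun h => by
    have := congrArg Complex.im h
    simp at this
  rw [div_eq_iff h1, Complex.exp_mul_I, ← Complex.ofReal_cos, ← Complex.ofReal_sin, Real.cos_two_mul,
    Real.sin_two_mul, Real.cos_sq_arctan, mul_assoc, mul_comm (Real.sin _), Real.cos_arctan,
    Real.sin_arctan, mul_comm]
  have h2 : 0 < 1 + a ^ 2 := by positivity
  have h3 : 1 / √(1 + a ^ 2) * (a / √(1 + a ^ 2)) = a / (1 + a ^ 2) := by
    rw [div_mul_div_comm, Real.mul_self_sqrt h2.le, one_mul]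
  rw [h3]
  have h4 : (1 + (a : ℂ) ^ 2) ≠ 0 := by exact_mod_cast h2.ne'
  push_cast
  field_simp
  ring_nf
  simp only [Complex.I_sq]
  ring

/-- A unitary matrix without eigenvalue `-1` has a logarithm. -/
theorem exists_exp_of_unitary {U : Matrix m m ℂ} (hU : Uᴴ * U = 1) (h1 : IsUnit (1 + U)) :
    ∃ (V : Matrix m m ℂ) (κ : m → ℝ), Vᴴ * V = 1 ∧ (∀ i, |κ i| < Real.pi) ∧
      U = conjDiag V (fun i => Complex.exp ((κ i : ℂ) * Complex.I)) := by
  obtain ⟨u, hu⟩ := h1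
  obtain ⟨B, hB, hB'⟩ : ∃ B : Matrix m m ℂ, (1 + U) * B = 1 ∧ B * (1 + U) = 1 :=
    ⟨(u⁻¹ : (Matrix m m ℂ)ˣ), by rw [← hu, Units.mul_inv], by rw [← hu, Units.inv_mul]⟩
  have hBH : Bᴴ * (1 + Uᴴ) = 1 := by
    have := congrArg conjTranspose hB
    simpa using this
  have hskew : Bᴴ * (1 - Uᴴ) = -((1 - U) * B) := by
    calc Bᴴ * (1 - Uᴴ) = Bᴴ * (1 - Uᴴ) * ((1 + U) * B) := by rw [hB, Matrix.mul_one]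
      _ = Bᴴ * (1 + U - Uᴴ - Uᴴ * U) * B := by noncomm_ring
      _ = Bᴴ * (-(1 - U + Uᴴ - Uᴴ * U)) * B := by rw [hU]; congr 2; abel
      _ = -((Bᴴ * (1 + Uᴴ)) * ((1 - U) * B)) := by noncomm_ring
      _ = _ := by rw [hBH, Matrix.one_mul]
  set A := Complex.I • ((1 - U) * B) with hAdef
  have hA : Aᴴ = A := by
    rw [hAdef, conjTranspose_smul, conjTranspose_mul, conjTranspose_sub, conjTranspose_one, hskew]
    simp
  have hAU : A * (1 + U) = Complex.I • (1 - U) := by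
    rw [hAdef, smul_mul_assoc, Matrix.mul_assoc, hB', Matrix.mul_one]
  obtain ⟨V, a, hV, hVa⟩ := exists_conjDiag hA
  refine ⟨V, fun i => 2 * Real.arctan (a i), hV, fun i => ?_, ?_⟩
  · rw [abs_lt]
    constructor <;> linarith [Real.neg_pi_div_two_lt_arctan (a i), Real.arctan_lt_pi_div_two (a i)]
  · have hI : conjDiag V (fun _ => Complex.I) = Complex.I • 1 := conjDiag_const hV _
    have e1 : conjDiag V (fun i => (a i : ℂ) + Complex.I) * U
        = conjDiag V (fun i => Complex.I - (a i : ℂ)) := by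
      rw [← conjDiag_add, ← conjDiag_sub, ← hVa, hI]
      have : A * U = Complex.I • (1 - U) - A := by
        rw [← hAU, Matrix.mul_add, Matrix.mul_one]; abel
      rw [Matrix.add_mul, this, smul_mul_assoc, Matrix.one_mul, smul_sub]
      abel
    have e2 : conjDiag V (fun i => ((a i : ℂ) + Complex.I)⁻¹)
        * conjDiag V (fun i => (a i : ℂ) + Complex.I) = 1 := by
      rw [conjDiag_mul hV]
      have : (fun i => ((a i : ℂ) + Complex.I)⁻¹ * ((a i : ℂ) + Complex.I)) = fun _ => 1 := by
        ext i
        refine inv_mul_cancel₀ fun h => ?_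
        have := congrArg Complex.im h
        simp at this
      rw [this, conjDiag_const hV, one_smul]
    calc U = conjDiag V (fun i => ((a i : ℂ) + Complex.I)⁻¹)
        * (conjDiag V (fun i => (a i : ℂ) + Complex.I) * U) := by
          rw [← Matrix.mul_assoc, e2, Matrix.one_mul]
      _ = _ := by
        rw [e1, conjDiag_mul hV]
        congr 1; ext i
        rw [← cayley_eq_exp, div_eq_inv_mul]

/-- The one-parameter unitary group with generator `V diag(κ) Vᴴ`. -/
noncomputable def flow (V : Matrix m m ℂ) (κ : m → ℝ) (t : ℝ) : Matrix m m ℂ :=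
  conjDiag V (fun i => Complex.exp (((t * κ i : ℝ) : ℂ) * Complex.I))

theorem flow_add {V : Matrix m m ℂ} (hV : Vᴴ * V = 1) (κ : m → ℝ) (s t : ℝ) :
    flow V κ (s + t) = flow V κ s * flow V κ t := by
  rw [flow, flow, flow, conjDiag_mul hV]
  congr 1; ext i
  rw [← Complex.exp_add]; push_cast; ring_nf

theorem flow_zero {V : Matrix m m ℂ} (hV : Vᴴ * V = 1) (κ : m → ℝ) :
    flow V κ 0 = 1 := by
  simp only [flow, zero_mul, Complex.ofReal_zero, Complex.exp_zero]
  rw [conjDiag_const hV, one_smul]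

theorem flow_neg_mul {V : Matrix m m ℂ} (hV : Vᴴ * V = 1) (κ : m → ℝ) (t : ℝ) :
    flow V κ (-t) * flow V κ t = 1 := by
  rw [← flow_add hV, neg_add_cancel, flow_zero hV]

theorem flow_add_neg (V : Matrix m m ℂ) (κ : m → ℝ) (t : ℝ) :
    flow V κ t + flow V κ (-t) = conjDiag V (fun i => ((2 * Real.cos (t * κ i) : ℝ) : ℂ)) := by
  rw [flow, flow, conjDiag_add]
  congr 1; ext i
  push_cast
  rw [Complex.two_cos]
  ring_nf

theorem trace_flow_re {V : Matrix m m ℂ} (hV : Vᴴ * V = 1) (κ : m → ℝ) (t : ℝ) :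
    (flow V κ t).trace.re = ∑ i, Real.cos (t * κ i) := by
  rw [flow, trace_conjDiag hV, Complex.re_sum]
  exact Finset.sum_congr rfl fun i _ => Complex.exp_ofReal_mul_I_re _

theorem flow_conjTranspose (V : Matrix m m ℂ) (κ : m → ℝ) (t : ℝ) :
    (flow V κ t)ᴴ = flow V κ (-t) := by
  rw [flow, flow, conjDiag_conjTranspose]
  congr 1; ext i
  rw [Complex.star_def, ← Complex.exp_conj]
  simp

/-- `t ↦ S * flow V κ t` is a geodesic of symmetries. -/
structure IsGeod (S V : Matrix m m ℂ) (κ : m → ℝ) : Prop where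
  sym : IsSym S
  unit : Vᴴ * V = 1
  anti : ∀ t, S * flow V κ t = flow V κ (-t) * S

namespace IsGeod

variable {S V : Matrix m m ℂ} {κ : m → ℝ}

theorem isSym (h : IsGeod S V κ) (t : ℝ) : IsSym (S * flow V κ t) where
  herm := by rw [conjTranspose_mul, h.sym.herm, flow_conjTranspose, h.anti]
  sq := by
    calc _ = (S * flow V κ t) * S * flow V κ t := by simp only [Matrix.mul_assoc]
      _ = flow V κ (-t) * (S * S) * flow V κ t := by rw [h.anti]; simp only [Matrix.mul_assoc]
      _ = 1 := by rw [h.sym.sq, Matrix.mul_one, flow_neg_mul h.unit]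
  tr := by
    have : flow V κ t = flow V κ (t / 2) * flow V κ (t / 2) := by
      rw [← flow_add h.unit]; ring_nf
    rw [this, ← Matrix.mul_assoc, h.anti, trace_mul_comm, ← Matrix.mul_assoc, ← flow_add h.unit,
      add_neg_cancel, flow_zero h.unit, Matrix.one_mul, h.sym.tr]

theorem mul (h : IsGeod S V κ) (s t : ℝ) : (S * flow V κ s) * (S * flow V κ t) = flow V κ (t - s) := by
  calc _ = (S * flow V κ s) * S * flow V κ t := by simp only [Matrix.mul_assoc]
    _ = flow V κ (-s) * (S * S) * flow V κ t := by rw [h.anti]; simp only [Matrix.mul_assoc]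
    _ = _ := by rw [h.sym.sq, Matrix.mul_one, ← flow_add h.unit]; ring_nf

theorem reflect (h : IsGeod S V κ) (s t : ℝ) :
    (S * flow V κ s) * (S * flow V κ t) * (S * flow V κ s) = S * flow V κ (2 * s - t) := by
  rw [h.mul, ← Matrix.mul_assoc, show t - s = -(s - t) by ring, ← h.anti, Matrix.mul_assoc,
    ← flow_add h.unit]
  ring_nf

theorem diff_sq (h : IsGeod S V κ) (s t : ℝ) :
    (S * flow V κ s - S * flow V κ t) * (S * flow V κ s - S * flow V κ t)
      = conjDiag V (fun i => (((2 * Real.sin ((t - s) * κ i / 2)) ^ 2 : ℝ) : ℂ)) := by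
  have : (S * flow V κ s - S * flow V κ t) * (S * flow V κ s - S * flow V κ t)
      = (2 : ℂ) • 1 - (flow V κ (t - s) + flow V κ (-(t - s))) := by
    rw [sub_mul, mul_sub, mul_sub, h.mul, h.mul, h.mul, h.mul, sub_self, sub_self,
      flow_zero h.unit, neg_sub, two_smul]
    abel
  rw [this, flow_add_neg, ← conjDiag_const h.unit, conjDiag_sub]
  congr 1; ext i
  have h2 : Real.cos ((t - s) * κ i) = 1 - 2 * Real.sin ((t - s) * κ i / 2) ^ 2 := by
    have := Real.cos_two_mul ((t - s) * κ i / 2)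
    rw [mul_div_cancel₀ _ two_ne_zero] at this
    rw [this, Real.cos_sq']; ring
  rw [h2]; push_cast; ring

theorem hs_eq (h : IsGeod S V κ) (s t :
    ℝ) : hs (S * flow V κ s) (S * flow V κ t)
    = ∑ i, (2 * Real.sin ((t - s) * κ i / 2)) ^ 2 := by
  rw [hs, h.diff_sq, trace_conjDiag h.unit, ← Complex.ofReal_sum, Complex.ofReal_re]

theorem dp_eq (h : IsGeod S V κ) (p :
    ℝ) (s t : ℝ) : dp p (S * flow V κ s) (S * flow V κ t)
    = ∑ i, |2 * Real.sin ((t - s) * κ i / 2)| ^ p := by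
  rw [dp, h.diff_sq, specSum_conjDiag _ h.unit]
  refine Finset.sum_congr rfl fun i _ => ?_
  rw [← sq_abs, ← Real.rpow_natCast, ← Real.rpow_mul (abs_nonneg _)]
  congr 1; push_cast; ring

end IsGeod

/-- Symmetries without antipodal directions are joined by a geodesic. -/
theorem exists_geod {S T : Matrix m m ℂ} (hS : IsSym S) (hT : IsSym T) (h : IsUnit (S + T)) :
    ∃ (V : Matrix m m ℂ) (κ : m → ℝ), IsGeod S V κ ∧ (∀ i, |κ i| < Real.pi) ∧
      T = S * flow V κ 1 := by
  have hU : (S * T)ᴴ * (S * T) = 1 := by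
    rw [conjTranspose_mul, hS.herm, hT.herm]
    calc _ = T * (S * S) * T := by simp only [Matrix.mul_assoc]
      _ = 1 := by rw [hS.sq, Matrix.mul_one, hT.sq]
  have hSu : IsUnit S := ⟨⟨S, S, hS.sq, hS.sq⟩, rfl⟩
  have h1 : IsUnit (1 + S * T) := by
    have : 1 + S * T = S * (S + T) := by rw [Matrix.mul_add, hS.sq]
    rw [this]; exact hSu.mul h
  obtain ⟨V, κ, hV, hκ, hUV⟩ := exists_exp_of_unitary hU h1
  have hflow : S * T = flow V κ 1 := by rw [hUV, flow]; simp
  refine ⟨V, κ, ⟨hS, hV, fun t => ?_⟩, hκ, ?_⟩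
  · have h2 : S * flow V κ 1 = flow V κ (-1) * S := by
      rw [← flow_conjTranspose, ← hflow, conjTranspose_mul, hS.herm, hT.herm, ← Matrix.mul_assoc,
        hS.sq, Matrix.mul_assoc, hS.sq, Matrix.one_mul, Matrix.mul_one]
    refine conjDiag_intertwine hV h2 fun i j hij => ?_
    have hj := abs_lt.mp (hκ j)
    have hi := abs_lt.mp (hκ i)
    have h3 := Complex.exp_inj_of_neg_pi_lt_of_le_pi (by simpa using hj.1)
      (by simpa using hj.2.le) (by simp; linarith) (by simp; linarith) hij
    have h4 : κ j = -κ i := by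
      have := congrArg Complex.im h3
      simpa using this
    rw [h4]; push_cast; ring_nf
  · rw [← hflow, ← Matrix.mul_assoc, hS.sq, Matrix.one_mul]

theorem isUnit_add_of_hs_lt {S T : Matrix m m ℂ} (hS : IsSym S) (hT : IsSym T)
    (h : hs S T < 4) : IsUnit (S + T) := by
  obtain ⟨V, a, hV, ha, hsq, hle, -, -⟩ := exists_diff_sq hS.herm hT.herm
  have e : (S + T) * (S + T) = conjDiag V (fun i => 4 - (a i : ℂ)) := by
    rw [← conjDiag_sub, ← hsq, conjDiag_const hV]
    have h1 : (S - T) * (S - T) = (2 : ℂ) • 1 - S * T - T * S := by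
      calc _ = S * S - S * T - T * S + T * T := by noncomm_ring
        _ = _ := by rw [hS.sq, hT.sq, two_smul]; abel
    have h2 : (S + T) * (S + T) = (2 : ℂ) • 1 + S * T + T * S := by
      calc _ = S * S + S * T + T * S + T * T := by noncomm_ring
        _ = _ := by rw [hS.sq, hT.sq, two_smul]; abel
    rw [h1, h2]; module
  have h3 : (S + T) * ((S + T) * conjDiag V (fun i => (4 - (a i : ℂ))⁻¹)) = 1 := by
    rw [← Matrix.mul_assoc, e, conjDiag_mul hV]
    have : (fun i => (4 - (a i : ℂ)) * (4 - (a i : ℂ))⁻¹) = fun _ => 1 := by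
      ext i
      refine mul_inv_cancel₀ fun h0 => ?_
      have h5 : (4 : ℝ) - a i = 0 := by exact_mod_cast h0
      linarith [hle i]
    rw [this, conjDiag_const hV, one_smul]
  exact ⟨⟨_, _, h3, mul_eq_one_comm.mp h3⟩, rfl⟩

theorem dp_self {p : ℝ} (hp : 0 < p) {S : Matrix m m ℂ} (hS : Sᴴ = S) : dp p S S = 0 := by
  refine le_antisymm ((dp_le hS hS hp).trans ?_) (dp_nonneg hS hS p)
  simp [hs, Real.zero_rpow (half_pos hp).ne']

theorem hs_nonneg {S T : Matrix m m ℂ} (hS : Sᴴ = S) (hT : Tᴴ = T) : 0 ≤ hs S T :=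
  trace_sq_nonneg (by simp [hS, hT])

theorem eq_of_dp_eq_zero {p : ℝ} (hp : 0 < p) {S T : Matrix m m ℂ} (hS : Sᴴ = S) (hT : Tᴴ = T)
    (h : dp p S T = 0) : S = T := by
  refine eq_of_hs_eq_zero hS hT (le_antisymm ((hs_le hS hT hp).trans ?_) (hs_nonneg hS hT))
  rw [h, Real.zero_rpow (div_pos two_pos hp).ne', mul_zero]

variable (m) in
/-- The type of traceless symmetries. -/
abbrev Symm := {S : Matrix m m ℂ // IsSym S}

/-- The reflection `x ↦ c x c` of the space of symmetries. -/
def refl (c : Symm m) : Equiv.Perm (Symm m) where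
  toFun x := ⟨c.1 * x.1 * c.1, c.2.conj x.2⟩
  invFun x := ⟨c.1 * x.1 * c.1, c.2.conj x.2⟩
  left_inv x := Subtype.ext (c.2.conj_conj x.1)
  right_inv x := Subtype.ext (c.2.conj_conj x.1)

theorem refl_self (c : Symm m) : refl c c = c := by
  refine Subtype.ext ?_
  change c.1 * c.1 * c.1 = c.1
  rw [c.2.sq, Matrix.one_mul]

theorem refl_refl (c x : Symm m) : refl c (refl c x) = x := (refl c).left_inv x

/-- Preservation of the `L^p`-distance. -/
def PresDp (p : ℝ) (g : Equiv.Perm (Symm m)) : Prop :=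
  ∀ x y, dp p (g x).1 (g y).1 = dp p x.1 y.1

theorem presDp_refl (p : ℝ) (c : Symm m) : PresDp p (refl c) := fun x y => dp_conj p c.2 x.1 y.1

theorem PresDp.mul {p : ℝ} {g h : Equiv.Perm (Symm m)} (hg : PresDp p g) (hh : PresDp p h) :
    PresDp p (g * h) := fun x y => (hg _ _).trans (hh x y)

theorem PresDp.inv {p : ℝ} {g : Equiv.Perm (Symm m)} (hg : PresDp p g) : PresDp p g⁻¹ :=
  fun x y => by
    have := hg (g⁻¹ x) (g⁻¹ y)
    simpa using this.symm

theorem hs_le_of_dp_le {p δ : ℝ} (hp : 0 < p) (hδ : Fintype.card m * δ ^ (2 / p) ≤ 1 / 4)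
    {x y : Symm m} (h : dp p x.1 y.1 ≤ δ) : hs x.1 y.1 ≤ 1 / 4 := by
  refine (hs_le x.2.herm y.2.herm hp).trans (le_trans ?_ hδ)
  have := dp_nonneg x.2.herm y.2.herm p
  gcongr

/-- Isometries fixing both end points of a short geodesic fix its midpoint. -/
theorem fix_midpoint {p δ : ℝ} (hp : 0 < p) (hδ : Fintype.card m * δ ^ (2 / p) ≤ 1 / 4)
    {a c : Symm m} (h : dp p a.1 c.1 ≤ δ) {g : Equiv.Perm (Symm m)} (hg : PresDp p g)
    (hga : g a = a) (hgb : g (refl c a) = refl c a) : g c = c := by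
  have hle : ∀ g : Equiv.Perm (Symm m), PresDp p g → g a = a → hs (g c).1 c.1 ≤ 1 := by
    intro g hg hga
    have h1 : dp p (g c).1 a.1 ≤ δ := by
      conv_lhs => rw [← hga]
      rw [hg, dp_comm]; exact h
    have h2 := hs_triangle (g c).2.herm a.2.herm c.2.herm
    have h3 := hs_le_of_dp_le hp hδ h1
    have h4 := hs_le_of_dp_le hp hδ h
    linarith
  have key : ∀ k : ℕ, ∀ g : Equiv.Perm (Symm m), PresDp p g → g a = a →
      g (refl c a) = refl c a → ((3 : ℝ) ^ (p / 2)) ^ k * dp p (g c).1 c.1 ≤ Fintype.card m := by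
    intro k
    induction k with
    | zero =>
      intro g hg hga _
      rw [pow_zero, one_mul]
      refine (dp_le (g c).2.herm c.2.herm hp).trans ?_
      have h1 := Real.rpow_le_one (hs_nonneg (g c).2.herm c.2.herm) (hle g hg hga) (half_pos hp).le
      nlinarith [Nat.cast_nonneg (α := ℝ) (Fintype.card m)]
    | succ k ih =>
      intro g hg hga hgb
      have ha' : g⁻¹ a = a := by rw [Equiv.Perm.inv_eq_iff_eq, hga]
      have hb' : g⁻¹ (refl c a) = refl c a := by rw [Equiv.Perm.inv_eq_iff_eq, hgb]
      have h1 := ih (refl c * g⁻¹ * refl c * g)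
        ((((presDp_refl p c).mul hg.inv).mul (presDp_refl p c)).mul hg)
        (by simp only [Equiv.Perm.mul_apply, hga, hb', refl_refl])
        (by simp only [Equiv.Perm.mul_apply, hgb, ha', refl_refl])
      have h2 : dp p ((refl c * g⁻¹ * refl c * g) c).1 c.1 = dp p (g c).1 (refl c (g c)).1 := by
        have e1 := presDp_refl p c (g⁻¹ (refl c (g c))) c
        rw [refl_self] at e1
        have e2 := hg (g⁻¹ (refl c (g c))) c
        rw [show g (g⁻¹ (refl c (g c))) = refl c (g c) from g.apply_symm_apply _] at e2
        simp only [Equiv.Perm.mul_apply]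
        rw [e1, ← e2, dp_comm]
      rw [h2] at h1
      refine le_trans ?_ h1
      rw [pow_succ, mul_assoc]
      gcongr
      exact dp_expand hp c.2 (g c).2 (hle g hg hga)
  refine Subtype.ext (eq_of_dp_eq_zero hp (g c).2.herm c.2.herm ?_)
  by_contra hne
  have hpos : 0 < dp p (g c).1 c.1 :=
    lt_of_le_of_ne (dp_nonneg (g c).2.herm c.2.herm p) (Ne.symm hne)
  obtain ⟨k, hk⟩ := pow_unbounded_of_one_lt (Fintype.card m / dp p (g c).1 c.1)
    (Real.one_lt_rpow (by norm_num : (1 : ℝ) < 3) (half_pos hp))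
  rw [div_lt_iff₀ hpos] at hk
  exact absurd (key k g hg hga hgb) (not_le.mpr hk)

theorem IsGeod.hs_half {S V : Matrix m m ℂ} {κ : m → ℝ} (h : IsGeod S V κ)
    (hκ : ∀ i, |κ i| < Real.pi) :
    2 * hs S (S * flow V κ (1 / 2)) ≤ hs S (S * flow V κ 1) := by
  have h1 := h.hs_eq 0 (1 / 2)
  have h2 := h.hs_eq 0 1
  rw [flow_zero h.unit, Matrix.mul_one] at h1 h2
  rw [h1, h2, Finset.mul_sum]
  refine Finset.sum_le_sum fun i _ => ?_
  have hi := abs_lt.mp (hκ i)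
  have h3 := Real.sin_two_mul (κ i / 4)
  have h4 := Real.cos_two_mul (κ i / 4)
  have h5 : 0 ≤ Real.cos (κ i / 2) :=
    Real.cos_nonneg_of_neg_pi_div_two_le_of_le (by linarith) (by linarith)
  rw [show 2 * (κ i / 4) = κ i / 2 by ring] at h3 h4
  rw [show (1 / 2 - 0) * κ i / 2 = κ i / 4 by ring, show (1 - 0) * κ i / 2 = κ i / 2 by ring, h3]
  nlinarith [sq_nonneg (Real.sin (κ i / 4)), mul_nonneg (sq_nonneg (Real.sin (κ i / 4))) h5]

/-- A local Mazur–Ulam theorem: isometries preserve short reflections. -/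
theorem PresDp.map_refl {p δ : ℝ} (hp : 0 < p) (hδ : Fintype.card m * δ ^ (2 / p) ≤ 1 / 4)
    {ψ : Equiv.Perm (Symm m)} (hψ : PresDp p ψ) {a c : Symm m} (h : dp p a.1 c.1 ≤ δ) :
    ψ (refl c a) = refl (ψ c) (ψ a) := by
  have hac : hs (ψ a).1 (ψ c).1 ≤ 1 / 4 := hs_le_of_dp_le hp hδ (by rwa [hψ])
  have hcb : hs (ψ c).1 (ψ (refl c a)).1 ≤ 1 / 4 := by
    refine hs_le_of_dp_le hp hδ ?_
    have := presDp_refl p c c a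
    rw [refl_self] at this
    rwa [hψ, this, dp_comm]
  have hab := hs_triangle (ψ a).2.herm (ψ c).2.herm (ψ (refl c a)).2.herm
  obtain ⟨V, κ, hgeo, hκ, hT⟩ := exists_geod (ψ a).2 (ψ (refl c a)).2
    (isUnit_add_of_hs_lt (ψ a).2 (ψ (refl c a)).2 (by linarith))
  set c' : Symm m := ⟨(ψ a).1 * flow V κ (1 / 2), hgeo.isSym _⟩ with hc'
  have hc'a : refl c' (ψ a) = ψ (refl c a) := by
    refine Subtype.ext ?_
    have := hgeo.reflect (1 / 2) 0
    rw [flow_zero hgeo.unit, Matrix.mul_one] at this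
    change (ψ a).1 * flow V κ (1 / 2) * (ψ a).1 * ((ψ a).1 * flow V κ (1 / 2)) = _
    rw [this, hT]; norm_num
  have hac' : hs (ψ a).1 c'.1 ≤ 1 / 2 := by
    have := hgeo.hs_half hκ
    rw [← hT] at this
    linarith
  have hcc' := hs_triangle (ψ c).2.herm (ψ a).2.herm c'.2.herm
  rw [hs_comm (ψ c).1 (ψ a).1] at hcc'
  have hu : IsUnit ((ψ c).1 + c'.1) := isUnit_add_of_hs_lt (ψ c).2 c'.2 (by linarith)
  have hfix := fix_midpoint hp hδ h (g := ψ⁻¹ * refl c' * ψ * refl c)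
    (((hψ.inv.mul (presDp_refl p c')).mul hψ).mul (presDp_refl p c))
    (by simp only [Equiv.Perm.mul_apply, ← hc'a, refl_refl]; exact ψ.symm_apply_apply _)
    (by simp only [Equiv.Perm.mul_apply, refl_refl, hc'a]; exact ψ.symm_apply_apply _)
  simp only [Equiv.Perm.mul_apply, refl_self, Equiv.Perm.inv_eq_iff_eq] at hfix
  have hcomm : c'.1 * (ψ c).1 = (ψ c).1 * c'.1 := by
    have h1 : c'.1 * (ψ c).1 * c'.1 = (ψ c).1 := congrArg Subtype.val hfix
    calc c'.1 * (ψ c).1 = c'.1 * (ψ c).1 * (c'.1 * c'.1) := by rw [c'.2.sq, Matrix.mul_one]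
      _ = (c'.1 * (ψ c).1 * c'.1) * c'.1 := by simp only [Matrix.mul_assoc]
      _ = _ := by rw [h1]
  have heq : ψ c = c' := by
    refine Subtype.ext (sub_eq_zero.mp (hu.mul_left_cancel ?_))
    rw [mul_zero]
    calc _ = (ψ c).1 * (ψ c).1 - c'.1 * c'.1 + (c'.1 * (ψ c).1 - (ψ c).1 * c'.1) := by noncomm_ring
      _ = 0 := by rw [(ψ c).2.sq, c'.2.sq, hcomm]; simp
  rw [heq, hc'a]

section Limits

open Filter Topology

/-- Sequences related by successive reflections lie on a geodesic. -/
theorem eq_geod_of_reflect {y : ℕ → Symm m} (hy : ∀ k, y (k + 2) = refl (y (k + 1)) (y k))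
    {V : Matrix m m ℂ} {μ : m → ℝ} (hg : IsGeod (y 0).1 V μ)
    (h1 : (y 1).1 = (y 0).1 * flow V μ 1) (k : ℕ) : (y k).1 = (y 0).1 * flow V μ k := by
  induction k using Nat.twoStepInduction with
  | zero => rw [Nat.cast_zero, flow_zero hg.unit, Matrix.mul_one]
  | one => rw [h1, Nat.cast_one]
  | more k ih1 ih2 =>
    rw [hy]
    change (y (k + 1)).1 * (y k).1 * (y (k + 1)).1 = _
    rw [ih1, ih2, hg.reflect]
    push_cast
    ring_nf

theorem two_sin_half_le (x : ℝ) : |2 * Real.sin (x / 2)| ≤ |x| := by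
  have h := Real.abs_sin_le_abs (x := x / 2)
  rw [abs_mul, abs_two]
  rw [abs_div, abs_two] at h
  linarith

theorem le_two_sin_half {x : ℝ} (hx : |x| < Real.pi) :
    2 / Real.pi * |x| ≤ |2 * Real.sin (x / 2)| := by
  have h := Real.mul_le_sin (x := |x| / 2) (by positivity) (by linarith)
  have h2 : |Real.sin (x / 2)| = Real.sin (|x| / 2) := by
    rw [Real.abs_sin_eq_sin_abs_of_abs_le_pi, abs_div, abs_two]
    rw [abs_div, abs_two]; linarith [abs_nonneg x]
  rw [abs_mul, abs_two, h2]
  calc _ = 2 * (2 / Real.pi * (|x| / 2)) := by ring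
    _ ≤ _ := by linarith

theorem sum_two_sin_le {p : ℝ} (hp : 0 < p) {κ : m → ℝ} (hκ : ∀ i, |κ i| < Real.pi) (M : ℕ) :
    ∑ i, |2 * Real.sin ((1 / M : ℝ) * κ i / 2)| ^ p ≤ Fintype.card m * (Real.pi / M) ^ p := by
  refine (Finset.sum_le_card_nsmul _ _ ((Real.pi / M) ^ p) fun i _ => ?_).trans (by simp)
  refine Real.rpow_le_rpow (abs_nonneg _) ((two_sin_half_le _).trans ?_) hp.le
  rw [abs_mul, abs_of_nonneg (by positivity : (0 : ℝ) ≤ 1 / M), one_div_mul_eq_div]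
  gcongr
  exact (hκ i).le

theorem PresDp.discrete_geod {p : ℝ} (hp : 0 < p) {ψ : Equiv.Perm (Symm m)} (hψ : PresDp p ψ)
    {S : Symm m} {V : Matrix m m ℂ} {κ : m → ℝ} (hg : IsGeod S.1 V κ)
    (hκ : ∀ i, |κ i| < Real.pi) {T : Symm m} (hT : T.1 = S.1 * flow V κ 1) :
    ∀ᶠ M : ℕ in atTop, ∃ μ : m → ℝ, (∀ i, |μ i| < Real.pi) ∧
      (∀ k : ℕ, ∑ i, |2 * Real.sin (k * μ i / 2)| ^ p
        = ∑ i, |2 * Real.sin ((k / M : ℝ) * κ i / 2)| ^ p) ∧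
      ∑ i, Real.cos (M * μ i) = ((ψ S).1 * (ψ T).1).trace.re := by
  obtain ⟨δ, hδ0, hδ⟩ : ∃ δ : ℝ, 0 < δ ∧ Fintype.card m * δ ^ (2 / p) ≤ 1 / 4 := by
    have h1 : Tendsto (fun δ : ℝ => Fintype.card m * δ ^ (2 / p)) (𝓝[>] 0) (𝓝 0) := by
      have : ContinuousAt (fun δ : ℝ => Fintype.card m * δ ^ (2 / p)) 0 :=
        continuousAt_const.mul (Real.continuousAt_rpow_const _ _ (Or.inr (by positivity)))
      have h2 := this.tendsto
      rw [Real.zero_rpow (div_pos two_pos hp).ne', mul_zero] at h2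
      exact h2.mono_left nhdsWithin_le_nhds
    obtain ⟨δ, h2, h3⟩ := ((h1.eventually_lt_const (by norm_num : (0 : ℝ) < 1 / 4)).and
      self_mem_nhdsWithin).exists
    exact ⟨δ, h3, h2.le⟩
  have hlim : Tendsto (fun M : ℕ => Fintype.card m * (Real.pi / M) ^ p) atTop (𝓝 0) := by
    have h1 : Tendsto (fun M : ℕ => (Real.pi / M : ℝ)) atTop (𝓝 0) :=
      tendsto_const_div_atTop_nhds_zero_nat _
    have h2 := (h1.rpow_const (p := p) (Or.inr hp.le)).const_mul (Fintype.card m : ℝ)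
    rwa [Real.zero_rpow hp.ne', mul_zero] at h2
  filter_upwards [hlim.eventually_lt_const hδ0, eventually_gt_atTop 0] with M hM hM0
  have hM0' : (M : ℝ) ≠ 0 := by positivity
  set x : ℕ → Symm m := fun k => ⟨S.1 * flow V κ (k / M), hg.isSym _⟩ with hx
  have hx0 : x 0 = S := Subtype.ext (by simp [hx, flow_zero hg.unit])
  have hxM : x M = T := Subtype.ext (by simp [hx, hT, div_self hM0'])
  have hstep : ∀ k, dp p (x k).1 (x (k + 1)).1 ≤ δ := fun k => by
    refine le_trans (le_of_eq ?_) ((sum_two_sin_le hp hκ M).trans hM.le)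
    rw [hx, hg.dp_eq]
    push_cast
    simp only [← sub_div, add_sub_cancel_left]
  have hrefl : ∀ k, x (k + 2) = refl (x (k + 1)) (x k) := fun k => by
    refine Subtype.ext ?_
    change _ = (x (k + 1)).1 * (x k).1 * (x (k + 1)).1
    rw [hx]
    simp only
    rw [hg.reflect]
    congr 2
    push_cast
    ring
  have hy : ∀ k, ψ (x (k + 2)) = refl (ψ (x (k + 1))) (ψ (x k)) := fun k => by
    rw [hrefl, hψ.map_refl hp hδ (hstep k)]
  obtain ⟨V', μ, hg', hμ, h1⟩ := exists_geod (ψ (x 0)).2 (ψ (x 1)).2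
    (isUnit_add_of_hs_lt (ψ (x 0)).2 (ψ (x 1)).2 (by
      have := hs_le_of_dp_le hp hδ (x := ψ (x 0)) (y := ψ (x 1)) (by rw [hψ]; exact hstep 0)
      linarith))
  have hyk := eq_geod_of_reflect (y := fun k => ψ (x k)) hy hg' h1
  refine ⟨μ, hμ, fun k => ?_, ?_⟩
  · have e1 := hψ (x 0) (x k)
    have e2 := hg'.dp_eq p 0 k
    have e3 := hg.dp_eq p 0 (k / M)
    rw [flow_zero hg'.unit, Matrix.mul_one, ← hyk] at e2
    rw [flow_zero hg.unit, Matrix.mul_one] at e3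
    simp only [sub_zero] at e2 e3
    rw [← e2, ← e3, e1, hx0]
  · have e := hg'.mul 0 M
    rw [← hyk, flow_zero hg'.unit, Matrix.mul_one, hx0, hxM, sub_zero] at e
    rw [e, trace_flow_re hg'.unit]

theorem sum_cos_eq_of_discrete {p : ℝ} (hp : 0 < p) {κ : m → ℝ} (hκ : ∀ i, |κ i| < Real.pi) {c : ℝ}
    (h : ∀ᶠ M : ℕ in atTop, ∃ μ : m → ℝ, (∀ i, |μ i| < Real.pi) ∧
      (∀ k : ℕ, ∑ i, |2 * Real.sin (k * μ i / 2)| ^ p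
        = ∑ i, |2 * Real.sin ((k / M : ℝ) * κ i / 2)| ^ p) ∧
      ∑ i, Real.cos (M * μ i) = c) : c = ∑ i, Real.cos (κ i) := by
  obtain ⟨M₀, hM₀⟩ := eventually_atTop.mp (h.and (eventually_gt_atTop 0))
  have hM₀' := fun M hM => (hM₀ M hM).1
  choose! μ hμ hsum hcos using hM₀'
  set C : ℝ := Real.pi / 2 * ((Fintype.card m : ℝ) ^ (1 / p) * Real.pi) with hC
  have hpi := Real.pi_pos
  have hC0 : 0 ≤ C := by positivity
  have hbd : ∀ M ≥ M₀, (fun i => (M : ℝ) * μ M i) ∈ Metric.closedBall (0 : m → ℝ) C := by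
    intro M hM
    have hMpos : (0 : ℝ) < M := by exact_mod_cast (hM₀ M hM).2
    rw [mem_closedBall_zero_iff, pi_norm_le_iff_of_nonneg hC0]
    intro i
    have e1 : |2 * Real.sin (μ M i / 2)| ^ p ≤ Fintype.card m * (Real.pi / M) ^ p := by
      have e2 := hsum M hM 1
      have e3 := sum_two_sin_le hp hκ M
      rw [Nat.cast_one] at e2
      rw [← e2] at e3
      refine le_trans ?_ e3
      refine le_trans (le_of_eq ?_) (Finset.single_le_sum
        (f := fun i => |2 * Real.sin (1 * μ M i / 2)| ^ p) (fun j _ => by positivity)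
        (Finset.mem_univ i))
      simp
    have e2 : |2 * Real.sin (μ M i / 2)| ≤ (Fintype.card m : ℝ) ^ (1 / p) * (Real.pi / M) := by
      have e3 := Real.rpow_le_rpow (by positivity) e1 (by positivity : 0 ≤ 1 / p)
      rwa [← Real.rpow_mul (abs_nonneg _), mul_one_div_cancel hp.ne', Real.rpow_one,
        Real.mul_rpow (by positivity) (by positivity), ← Real.rpow_mul (by positivity),
        mul_one_div_cancel hp.ne', Real.rpow_one] at e3
    have e4 := (le_two_sin_half (hμ M hM i)).trans e2
    rw [Real.norm_eq_abs, abs_mul, abs_of_pos hMpos, hC]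
    calc M * |μ M i| = M * (Real.pi / 2) * (2 / Real.pi * |μ M i|) := by field_simp
      _ ≤ M * (Real.pi / 2) * ((Fintype.card m : ℝ) ^ (1 / p) * (Real.pi / M)) := by gcongr
      _ = _ := by field_simp
  obtain ⟨η, -, θ, hθ, hlim⟩ := tendsto_subseq_of_frequently_bounded Metric.isBounded_closedBall
    (eventually_atTop.mpr ⟨M₀, hbd⟩).frequently
  have hlim' : ∀ i, Tendsto (fun j => (θ j : ℝ) * μ (θ j) i) atTop (𝓝 (η i)) :=
    fun i => (tendsto_pi_nhds.mp hlim) i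
  have hθM : ∀ᶠ j in atTop, M₀ ≤ θ j := hθ.tendsto_atTop.eventually_ge_atTop M₀
  have hc : c = ∑ i, Real.cos (η i) := by
    have h1 : Tendsto (fun j => ∑ i, Real.cos (θ j * μ (θ j) i)) atTop (𝓝 (∑ i, Real.cos (η i))) :=
      tendsto_finsetSum _ fun i _ => (Real.continuous_cos.tendsto _).comp (hlim' i)
    refine tendsto_nhds_unique (tendsto_const_nhds.congr' ?_) h1
    filter_upwards [hθM] with j hj using (hcos _ hj).symm
  have hsin : ∀ t > 0, ∑ i, |Real.sin (t * (η i / 2))| ^ p = ∑ i, |Real.sin (t * (κ i / 2))| ^ p := by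
    intro t ht
    have hk : Tendsto (fun j => ((⌊t * (θ j : ℝ)⌋₊ : ℝ) / θ j)) atTop (𝓝 t) :=
      (tendsto_nat_floor_mul_div_atTop ht.le).comp
        (tendsto_natCast_atTop_atTop.comp hθ.tendsto_atTop)
    have hcont : Continuous fun x : ℝ => |2 * Real.sin (x / 2)| ^ p :=
      Continuous.rpow_const (by fun_prop) fun _ => Or.inr hp.le
    have h1 : Tendsto (fun j => ∑ i, |2 * Real.sin (((⌊t * (θ j : ℝ)⌋₊ : ℝ) / θ j) * κ i / 2)| ^ p)
        atTop (𝓝 (∑ i, |2 * Real.sin (t * κ i / 2)| ^ p)) :=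
      tendsto_finsetSum _ fun i _ => (hcont.tendsto _).comp (hk.mul_const _)
    have h2 : Tendsto (fun j => ∑ i, |2 * Real.sin (((⌊t * (θ j : ℝ)⌋₊ : ℝ) / θ j)
        * (θ j * μ (θ j) i) / 2)| ^ p) atTop (𝓝 (∑ i, |2 * Real.sin (t * η i / 2)| ^ p)) :=
      tendsto_finsetSum _ fun i _ => (hcont.tendsto _).comp (hk.mul (hlim' i))
    have h3 := tendsto_nhds_unique h2 (h1.congr' (by
      filter_upwards [hθM] with j hj
      rw [← hsum _ hj]
      have : (θ j : ℝ) ≠ 0 := by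
        have := (hM₀ _ hj).2
        positivity
      refine Finset.sum_congr rfl fun i _ => ?_
      congr 5
      field_simp))
    have h4 : ∀ ζ : m → ℝ, ∑ i, |2 * Real.sin (t * ζ i / 2)| ^ p
        = 2 ^ p * ∑ i, |Real.sin (t * (ζ i / 2))| ^ p := fun ζ => by
      rw [Finset.mul_sum]
      refine Finset.sum_congr rfl fun i _ => ?_
      rw [abs_mul, abs_two, Real.mul_rpow two_pos.le (abs_nonneg _), mul_div_assoc]
    rw [h4, h4] at h3
    exact mul_left_cancel₀ (by positivity) h3
  have h5 := sum_cos_eq hp hsin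
  simp only [mul_div_cancel₀ _ (two_ne_zero (α := ℝ))] at h5
  rw [hc, h5]

theorem PresDp.trace_of_isUnit {p : ℝ} (hp : 0 < p) {ψ : Equiv.Perm (Symm m)} (hψ : PresDp p ψ)
    {S T : Symm m} (h : IsUnit (S.1 + T.1)) :
    ((ψ S).1 * (ψ T).1).trace.re = (S.1 * T.1).trace.re := by
  obtain ⟨V, κ, hg, hκ, hT⟩ := exists_geod S.2 T.2 h
  rw [sum_cos_eq_of_discrete hp hκ (hψ.discrete_geod hp hg hκ hT), hT, ← Matrix.mul_assoc, S.2.sq,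
    Matrix.one_mul, trace_flow_re hg.unit]
  simp

theorem conjDiag_apply (V : Matrix m m ℂ) (d : m → ℂ) (i j : m) :
    conjDiag V d i j = ∑ k, V i k * d k * star (V j k) := by
  rw [conjDiag, mul_apply]
  simp only [mul_diagonal, conjTranspose_apply]

/-- Two `±1`-valued families with the same sum agree up to a permutation. -/
theorem exists_perm_of_sum_eq {a b : m → ℝ} (ha : ∀ i, a i = 1 ∨ a i = -1)
    (hb : ∀ i, b i = 1 ∨ b i = -1) (h : ∑ i, a i = ∑ i, b i) :
    ∃ σ : Equiv.Perm m, ∀ i, a (σ i) = b i := by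
  classical
  have key : ∀ c : m → ℝ, (∀ i, c i = 1 ∨ c i = -1) →
      ∑ i, c i = 2 * (Fintype.card {i // c i = 1} : ℝ) - Fintype.card m := fun c hc => by
    have h1 : ∀ i, c i = 2 * (if c i = 1 then 1 else 0) - 1 := fun i => by
      rcases hc i with h | h <;> rw [h] <;> norm_num
    rw [Finset.sum_congr rfl fun i _ => h1 i, Finset.sum_sub_distrib, ← Finset.mul_sum,
      Finset.sum_boole, Fintype.card_subtype]
    simp
  have hcard : Fintype.card {i // b i = 1} = Fintype.card {i // a i = 1} := by
    have := key a ha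
    have := key b hb
    have h2 : (Fintype.card {i // b i = 1} : ℝ) = Fintype.card {i // a i = 1} := by linarith
    exact_mod_cast h2
  set e := Fintype.equivOfCardEq hcard
  refine ⟨e.extendSubtype, fun i => ?_⟩
  by_cases hi : b i = 1
  · rw [hi]; exact e.extendSubtype_mem i hi
  · have h1 := e.extendSubtype_not_mem i hi
    rw [(hb i).resolve_left hi]
    exact (ha _).resolve_left h1

theorem IsSym.exists_conjDiag {S : Matrix m m ℂ} (hS : IsSym S) :
    ∃ (V : Matrix m m ℂ) (a : m → ℝ), Vᴴ * V = 1 ∧ S = conjDiag V (fun i => (a i : ℂ)) ∧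
      (∀ i, a i = 1 ∨ a i = -1) ∧ ∑ i, a i = 0 := by
  obtain ⟨V, a, hV, h⟩ := HalfProj.exists_conjDiag hS.herm
  refine ⟨V, a, hV, h, fun i => ?_, ?_⟩
  · have h1 := hS.sq
    rw [h, conjDiag_mul hV, ← one_smul ℂ (1 : Matrix m m ℂ), ← conjDiag_const hV] at h1
    have h2 := congrFun (conjDiag_injective hV h1) i
    exact mul_self_eq_one_iff.mp (by exact_mod_cast h2)
  · have h1 := hS.tr
    rw [h, trace_conjDiag hV] at h1
    exact_mod_cast h1

theorem exists_unitary_conj {S T : Matrix m m ℂ} (hS : IsSym S) (hT : IsSym T) :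
    ∃ U : Matrix m m ℂ, Uᴴ * U = 1 ∧ U * T * Uᴴ = S := by
  obtain ⟨A, a, hA, hSA, ha, ha0⟩ := hS.exists_conjDiag
  obtain ⟨B, b, hB, hTB, hb, hb0⟩ := hT.exists_conjDiag
  obtain ⟨σ, hσ⟩ := exists_perm_of_sum_eq ha hb (ha0.trans hb0.symm)
  set A' := A.submatrix id σ with hA'
  have h1 : A'ᴴ * A' = 1 := by
    have := submatrix_mul_equiv Aᴴ A σ (Equiv.refl m) σ
    rw [hA, submatrix_one_equiv] at this
    exact this
  have h2 : conjDiag A' (fun i => (b i : ℂ)) = S := by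
    rw [hSA]
    ext i j
    rw [conjDiag_apply, conjDiag_apply, ← Equiv.sum_comp σ fun k => A i k * (a k : ℂ) * star (A j k)]
    exact Finset.sum_congr rfl fun k _ => by rw [hσ]; rfl
  refine ⟨A' * Bᴴ, ?_, ?_⟩
  · rw [conjTranspose_mul, conjTranspose_conjTranspose]
    calc _ = B * (A'ᴴ * A') * Bᴴ := by simp only [Matrix.mul_assoc]
      _ = 1 := by rw [h1, Matrix.mul_one, mul_eq_one_comm.mp hB]
  · rw [conjTranspose_mul, conjTranspose_conjTranspose, hTB, conjDiag, ← h2, conjDiag]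
    calc _ = A' * (Bᴴ * B) * diagonal (fun i => (b i : ℂ)) * (Bᴴ * B) * A'ᴴ := by
          simp only [Matrix.mul_assoc]
      _ = _ := by rw [hB, Matrix.mul_one, Matrix.mul_one]

/-- Some unimodular multiple of a matrix has no eigenvalue `-1`. -/
theorem exists_phase (U : Matrix m m ℂ) : ∃ ζ : ℂ, star ζ * ζ = 1 ∧ IsUnit (1 + ζ • U) := by
  have hinf : (Metric.sphere (0 : ℂ) 1).Infinite := by
    refine (isPreconnected_sphere (by rw [Complex.rank_real_complex]; norm_num) 0 1
      ).infinite_of_nontrivial ⟨1, by simp, -1, by simp, ?_⟩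
    norm_num
  obtain ⟨w, hw, hr⟩ : ∃ w ∈ Metric.sphere (0 : ℂ) 1, U.charpoly.eval w ≠ 0 := by
    by_contra! h
    exact U.charpoly_monic.ne_zero (Polynomial.eq_zero_of_infinite_isRoot _ (hinf.mono h))
  have hw1 : star w * w = 1 := by
    rw [Complex.star_def, ← Complex.normSq_eq_conj_mul_self, Complex.normSq_eq_norm_sq]
    simp [mem_sphere_zero_iff_norm.mp hw]
  refine ⟨-star w, by rw [star_neg, star_star, neg_mul_neg, mul_comm, hw1], ?_⟩
  rw [eval_charpoly] at hr
  have h1 : 1 + (-star w) • U = star w • (scalar m w - U) := by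
    rw [smul_sub, show scalar m w = w • (1 : Matrix m m ℂ) by rw [scalar_apply, smul_one_eq_diagonal],
      smul_smul, hw1, one_smul, neg_smul, sub_eq_add_neg]
  have hw0 : star w ≠ 0 := left_ne_zero_of_mul_eq_one hw1
  rw [h1, isUnit_iff_isUnit_det, det_smul]
  exact (mul_ne_zero (pow_ne_zero _ hw0) hr).isUnit

theorem tendsto_of_hs {α : Type*} {l : Filter α} {A : α → Matrix m m ℂ} {B : Matrix m m ℂ}
    (hA : ∀ x, (A x)ᴴ = A x) (hB : Bᴴ = B) (h : Tendsto (fun x => hs (A x) B) l (𝓝 0)) :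
    Tendsto A l (𝓝 B) := by
  refine tendsto_pi_nhds.mpr fun i => tendsto_pi_nhds.mpr fun j => ?_
  rw [tendsto_iff_norm_sub_tendsto_zero]
  have hle : ∀ x, ‖A x i j - B i j‖ ≤ √(hs (A x) B) := fun x => by
    refine Real.le_sqrt_of_sq_le ?_
    have h1 := trace_conjTranspose_mul_self_re (A x - B)
    rw [conjTranspose_sub, hA, hB] at h1
    rw [hs, h1]
    refine le_trans ?_ (Finset.single_le_sum (f := fun i => ∑ j, ‖(A x - B) j i‖ ^ 2)
      (fun _ _ => by positivity) (Finset.mem_univ j))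
    exact Finset.single_le_sum (f := fun k => ‖(A x - B) k j‖ ^ 2)
      (fun _ _ => by positivity) (Finset.mem_univ i)
  refine squeeze_zero (fun _ => norm_nonneg _) hle ?_
  have := (Real.continuous_sqrt.tendsto 0).comp h
  rwa [Real.sqrt_zero] at this

theorem continuous_flow (V : Matrix m m ℂ) (κ : m → ℝ) : Continuous (flow V κ) := by
  unfold flow conjDiag
  refine (continuous_const.matrix_mul (Continuous.matrix_diagonal ?_)).matrix_mul continuous_const
  fun_prop

theorem differentiable_mul_apply {A B : ℂ → Matrix m m ℂ}
    (hA : ∀ i j, Differentiable ℂ fun z => A z i j) (hB : ∀ i j, Differentiable ℂ fun z => B z i j)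
    (i j : m) : Differentiable ℂ fun z => (A z * B z) i j := by
  simp only [mul_apply]
  exact Differentiable.fun_sum fun k _ => (hA i k).mul (hB k j)

theorem differentiable_det {A : ℂ → Matrix m m ℂ} (h : ∀ i j, Differentiable ℂ fun z => A z i j) :
    Differentiable ℂ fun z => (A z).det := by
  have h1 : (fun z => (A z).det)
      = fun z => ∑ σ : Equiv.Perm m, ((Equiv.Perm.sign σ : ℤ) : ℂ) * ∏ i, A z (σ i) i := by
    funext z; rw [det_apply']
  rw [h1]
  refine Differentiable.fun_sum fun σ _ => Differentiable.const_mul ?_ _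
  intro z
  exact (HasDerivAt.fun_finsetProd (u := Finset.univ) fun i _ =>
    (h (σ i) i z).hasDerivAt).differentiableAt

theorem frequently_isUnit (S T V : Matrix m m ℂ) (κ : m → ℝ)
    (h : IsUnit (S + flow V κ 1 * T * flow V κ (-1))) :
    ∃ᶠ t in 𝓝[≠] (0 : ℝ), IsUnit (S + flow V κ t * T * flow V κ (-t)) := by
  by_contra hnot
  rw [not_frequently] at hnot
  set E : ℂ → Matrix m m ℂ := fun z => conjDiag V fun i => Complex.exp (z * κ i * Complex.I) with hE
  have hEt : ∀ t : ℝ, E t = flow V κ t := fun t => by simp [hE, flow]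
  set F : ℂ → ℂ := fun z => (S + E z * T * E (-z)).det with hF
  have hFd : Differentiable ℂ F := by
    have h1 : ∀ i j, Differentiable ℂ fun z => E z i j := fun i j => by
      simp only [hE, conjDiag_apply]
      fun_prop
    have h2 : ∀ i j, Differentiable ℂ fun z => E (-z) i j := fun i j =>
      (h1 i j).comp differentiable_neg
    have h3 := differentiable_mul_apply (A := fun z => E z * T) (B := fun z => E (-z))
      (differentiable_mul_apply (A := E) (B := fun _ => T) h1 fun _ _ => differentiable_const _) h2
    exact differentiable_det (A := fun z => S + E z * T * E (-z)) fun i j =>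
      (differentiable_const (S i j)).add (h3 i j)
  have hFt : ∀ t : ℝ, F t = (S + flow V κ t * T * flow V κ (-t)).det := fun t => by
    rw [hF]; simp only; rw [hEt, ← Complex.ofReal_neg, hEt]
  have hfreq : ∃ᶠ z in 𝓝[≠] (0 : ℂ), F z = 0 := by
    have ht : Tendsto (fun t : ℝ => (t : ℂ)) (𝓝[≠] 0) (𝓝[≠] 0) := by
      refine tendsto_nhdsWithin_iff.mpr ⟨?_, ?_⟩
      · exact (Complex.continuous_ofReal.tendsto' 0 0 (by simp)).mono_left nhdsWithin_le_nhds
      · filter_upwards [self_mem_nhdsWithin] with t ht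
        simpa using ht
    refine ht.frequently (hnot.frequently.mono fun t ht => ?_)
    rw [hFt]
    by_contra h0
    exact ht ((isUnit_iff_isUnit_det _).mpr (Ne.isUnit h0))
  have h0 := hFd.differentiableOn.analyticOnNhd isOpen_univ
    |>.eqOn_zero_of_preconnected_of_frequently_eq_zero isPreconnected_univ (Set.mem_univ 0) hfreq
      (Set.mem_univ ((1 : ℝ) : ℂ))
  rw [hFt] at h0
  rw [isUnit_iff_isUnit_det, h0] at h
  exact not_isUnit_zero h

/-- Isometries preserve the trace form. -/
theorem PresDp.trace_eq {p : ℝ} (hp : 0 < p) {ψ : Equiv.Perm (Symm m)} (hψ : PresDp p ψ)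
    (S T : Symm m) : ((ψ S).1 * (ψ T).1).trace.re = (S.1 * T.1).trace.re := by
  obtain ⟨U₀, hU₀, hU₀T⟩ := exists_unitary_conj S.2 T.2
  obtain ⟨ζ, hζ, hζU⟩ := exists_phase U₀
  have hU : (ζ • U₀)ᴴ * (ζ • U₀) = 1 := by
    rw [conjTranspose_smul, smul_mul_smul_comm, hζ, hU₀, one_smul]
  obtain ⟨V, κ, hV, -, hUV⟩ := exists_exp_of_unitary hU hζU
  have hUf : ζ • U₀ = flow V κ 1 := by rw [hUV, flow]; simp
  have h1 : flow V κ 1 * T.1 * flow V κ (-1) = S.1 := by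
    rw [← flow_conjTranspose, ← hUf, conjTranspose_smul, smul_mul_assoc, smul_mul_smul_comm,
      mul_comm, hζ, one_smul, hU₀T]
  have hunit : IsUnit (S.1 + flow V κ 1 * T.1 * flow V κ (-1)) := by
    rw [h1, ← two_smul ℂ]
    have h2 : (2 : ℂ) ≠ 0 := two_ne_zero
    refine ⟨⟨(2 : ℂ) • S.1, (2⁻¹ : ℂ) • S.1, ?_, ?_⟩, rfl⟩ <;>
    · rw [smul_mul_smul_comm, S.2.sq]; norm_num
  set R : ℝ → Symm m := fun t => ⟨flow V κ t * T.1 * flow V κ (-t), by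
    refine ⟨?_, ?_, ?_⟩
    · rw [conjTranspose_mul, conjTranspose_mul, T.2.herm, flow_conjTranspose, flow_conjTranspose,
        neg_neg, Matrix.mul_assoc]
    · calc _ = flow V κ t * T.1 * (flow V κ (-t) * flow V κ t) * T.1 * flow V κ (-t) := by
            simp only [Matrix.mul_assoc]
        _ = flow V κ t * (T.1 * T.1) * flow V κ (-t) := by
            rw [flow_neg_mul hV, Matrix.mul_one]; simp only [Matrix.mul_assoc]
        _ = 1 := by rw [T.2.sq, Matrix.mul_one, ← flow_add hV, add_neg_cancel, flow_zero hV]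
    · rw [trace_mul_comm, ← Matrix.mul_assoc, flow_neg_mul hV, Matrix.one_mul, T.2.tr]⟩ with hR
  have hRc : Continuous fun t => (R t).1 :=
    ((continuous_flow V κ).matrix_mul continuous_const).matrix_mul
      ((continuous_flow V κ).comp continuous_neg)
  have hR0 : (R 0).1 = T.1 := by simp [hR, flow_zero hV]
  have hRT : Tendsto (fun t => (R t).1) (𝓝[≠] 0) (𝓝 T.1) := by
    have := hRc.tendsto 0
    rw [hR0] at this
    exact this.mono_left nhdsWithin_le_nhds
  have hhs : Tendsto (fun t => hs (R t).1 T.1) (𝓝[≠] 0) (𝓝 0) := by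
    have hc : Continuous fun A : Matrix m m ℂ => hs A T.1 := by
      unfold hs
      refine Complex.continuous_re.comp (Continuous.matrix_trace ?_)
      exact (continuous_id.sub continuous_const).matrix_mul (continuous_id.sub continuous_const)
    have := (hc.tendsto T.1).comp hRT
    rwa [show hs T.1 T.1 = 0 by simp [hs]] at this
  have hdp : Tendsto (fun t => dp p (R t).1 T.1) (𝓝[≠] 0) (𝓝 0) := by
    refine squeeze_zero (fun t => dp_nonneg (R t).2.herm T.2.herm p)
      (fun t => dp_le (R t).2.herm T.2.herm hp) ?_
    have := (hhs.rpow_const (p := p / 2) (Or.inr (half_pos hp).le)).const_mul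
      (Fintype.card m : ℝ)
    rwa [Real.zero_rpow (half_pos hp).ne', mul_zero] at this
  have hψR : Tendsto (fun t => (ψ (R t)).1) (𝓝[≠] 0) (𝓝 (ψ T).1) := by
    refine tendsto_of_hs (fun t => (ψ (R t)).2.herm) (ψ T).2.herm ?_
    refine squeeze_zero (fun t => hs_nonneg (ψ (R t)).2.herm (ψ T).2.herm)
      (fun t => hs_le (ψ (R t)).2.herm (ψ T).2.herm hp) ?_
    simp only [hψ _ _]
    have := (hdp.rpow_const (p := 2 / p) (Or.inr (div_pos two_pos hp).le)).const_mul
      (Fintype.card m : ℝ)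
    rwa [Real.zero_rpow (div_pos two_pos hp).ne', mul_zero] at this
  have hc : ∀ X : Matrix m m ℂ, Continuous fun A : Matrix m m ℂ => (X * A).trace.re := fun X =>
    Complex.continuous_re.comp (continuous_const.matrix_mul continuous_id).matrix_trace
  have hlim := (((hc (ψ S).1).tendsto _).comp hψR).sub (((hc S.1).tendsto _).comp hRT)
  have := isClosed_singleton.mem_of_frequently_of_tendsto (s := {(0 : ℝ)})
    ((frequently_isUnit S.1 T.1 V κ hunit).mono fun t ht => ?_) hlim
  · exact sub_eq_zero.mp this
  · simp only [Function.comp_apply, Set.mem_singleton_iff, sub_eq_zero]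
    exact hψ.trace_of_isUnit hp (S := S) (T := R t) ht

end Limits

/-- Projections of normalized trace `1/2`. -/
structure IsHalf (P : Matrix m m ℂ) : Prop where
  herm : Pᴴ = P
  idem : P * P = P
  tr : 2 * P.trace = Fintype.card m

theorem IsHalf.compl {P : Matrix m m ℂ} (h : IsHalf P) : IsHalf (1 - P) where
  herm := by rw [conjTranspose_sub, conjTranspose_one, h.herm]
  idem := by
    calc _ = 1 - P - P + P * P := by noncomm_ring
      _ = _ := by rw [h.idem]; abel
  tr := by rw [trace_sub, trace_one, mul_sub, h.tr]; ring

theorem isHalf_diagonal_add {n : ℕ} (hcard : Fintype.card m = 2 * n) {I : Finset m}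
    (hI : I.card + 1 = n) {w : m → ℂ} (hw : ∀ i ∈ I, w i = 0) {c : ℂ} (hc : star c = c)
    (hcw : c * (star w ⬝ᵥ w) = 1) :
    IsHalf (diagonal (fun i => if i ∈ I then (1 : ℂ) else 0) + c • vecMulVec w (star w)) := by
  set D : Matrix m m ℂ := diagonal fun i => if i ∈ I then (1 : ℂ) else 0 with hD
  set R := vecMulVec w (star w) with hR
  have hDw : D *ᵥ w = 0 := by
    ext i
    rw [hD, mulVec_diagonal]
    by_cases hi : i ∈ I <;> simp [hi, hw]
  have hDH : Dᴴ = D := by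
    rw [hD, diagonal_conjTranspose]
    congr 1; ext i
    by_cases hi : i ∈ I <;> simp [hi]
  have hRH : Rᴴ = R := by rw [hR, conjTranspose_vecMulVec, star_star]
  have hDR : D * R = 0 := by rw [hR, mul_vecMulVec, hDw, zero_vecMulVec]
  have hRD : R * D = 0 := by
    have := congrArg conjTranspose hDR
    rwa [conjTranspose_mul, hDH, hRH, conjTranspose_zero] at this
  have hDD : D * D = D := by
    rw [hD, diagonal_mul_diagonal]
    congr 1; ext i
    by_cases hi : i ∈ I <;> simp [hi]
  have hRR : (c • R) * (c • R) = c • R := by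
    rw [hR, smul_mul_smul_comm, vecMulVec_mul_vecMulVec, vecMulVec_smul, smul_smul, mul_assoc, hcw,
      mul_one]
  refine ⟨?_, ?_, ?_⟩
  · rw [conjTranspose_add, conjTranspose_smul, hDH, hRH, hc]
  · rw [Matrix.add_mul, Matrix.mul_add, Matrix.mul_add, hDD, hRR, mul_smul_comm, hDR, smul_mul_assoc,
      hRD]
    simp
  · rw [trace_add, trace_smul, hR, trace_vecMulVec, dotProduct_comm, smul_eq_mul, hcw, hD,
      trace_diagonal, hcard, ← hI]
    simp

variable (m) in
/-- The type of projections of normalized trace `1/2`. -/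
abbrev Half := {P : Matrix m m ℂ // IsHalf P}

theorem exists_finset_avoiding {n : ℕ} (hcard : Fintype.card m = 2 * n) (hn : 1 ≤ n) (i j : m) :
    ∃ I : Finset m, I.card + 1 = n ∧ i ∉ I ∧ j ∉ I := by
  have h1 : n - 1 ≤ (Finset.univ \ {i, j} : Finset m).card := by
    have h2 := Finset.le_card_sdiff ({i, j} : Finset m) Finset.univ
    have h3 := Finset.card_le_two (a := i) (b := j)
    rw [Finset.card_univ, hcard] at h2
    omega
  obtain ⟨I, hI, hIc⟩ := Finset.exists_subset_card_eq h1
  refine ⟨I, by omega, fun h => ?_, fun h => ?_⟩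
  · simpa using hI h
  · simpa using hI h

theorem single_vecMulVec_single_one (i j : m) :
    vecMulVec (Pi.single i (1 : ℂ)) (Pi.single j 1) = single i j 1 := by
  ext k l
  simp only [vecMulVec_apply, Pi.single_apply, single_apply]
  grind

theorem isHalf_coord {n : ℕ} (hcard : Fintype.card m = 2 * n) {I : Finset m}
    (hI : I.card + 1 = n) {i : m} (hi : i ∉ I) :
    IsHalf (diagonal (fun i => if i ∈ I then (1 : ℂ) else 0) + single i i 1) := by
  have := isHalf_diagonal_add hcard hI (w := Pi.single i 1) (c := 1)
    (fun k hk => by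
      rw [Pi.single_apply, if_neg]
      rintro rfl
      exact hi hk) (by simp) (by simp)
  rwa [one_smul, ← Pi.single_star, star_one, single_vecMulVec_single_one] at this

theorem span_half {n : ℕ} (hcard : Fintype.card m = 2 * n) (hn : 1 ≤ n) :
    Submodule.span ℂ {P : Matrix m m ℂ | IsHalf P} = ⊤ := by
  set Sp := Submodule.span ℂ {P : Matrix m m ℂ | IsHalf P} with hSp
  have hmem : ∀ {P : Matrix m m ℂ}, IsHalf P → P ∈ Sp := fun h => Submodule.subset_span h
  have hoff : ∀ i j : m, i ≠ j → single i j (1 : ℂ) ∈ Sp := by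
    intro i j hij
    obtain ⟨I, hI, hi, hj⟩ := exists_finset_avoiding hcard hn i j
    set D : Matrix m m ℂ := diagonal fun i => if i ∈ I then (1 : ℂ) else 0 with hD
    set w : ℂ → m → ℂ := fun z => Pi.single i 1 + z • Pi.single j 1 with hw
    have hsw : ∀ z, star (w z) = Pi.single i 1 + star z • Pi.single j 1 := fun z => by
      simp only [hw, star_add, star_smul, ← Pi.single_star, star_one]
    have hP : ∀ z : ℂ, star z * z = 1 →
        D + (1 / 2 : ℂ) • (single i i 1 + star z • single i j 1 + z • single j i 1
          + single j j 1) ∈ Sp := by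
      intro z hz
      have h1 := isHalf_diagonal_add hcard hI (w := w z) (c := 1 / 2)
        (fun k hk => by
          have h1 : k ≠ i := fun h => hi (h ▸ hk)
          have h2 : k ≠ j := fun h => hj (h ▸ hk)
          simp [hw, h1, h2]) (by simp)
        (by
          rw [hsw]
          rw [mul_comm, Complex.star_def] at hz
          simp [hw, hij, hij.symm, hz]
          norm_num)
      have h2 : vecMulVec (w z) (star (w z)) = single i i 1 + star z • single i j 1
          + z • single j i 1 + single j j 1 := by
        rw [hsw]
        simp only [hw, add_vecMulVec, vecMulVec_add, smul_vecMulVec, vecMulVec_smul,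
          single_vecMulVec_single_one, smul_add, smul_smul, hz]
        simp only [one_smul]
        abel
      rw [h2] at h1
      exact hmem h1
    have h1 := hP 1 (by simp)
    have h2 := hP (-1) (by simp)
    have h3 := hP Complex.I (by simp)
    have h4 := hP (-Complex.I) (by simp)
    have h5 : single i j (1 : ℂ) = (1 / 2 : ℂ) •
        ((D + (1 / 2 : ℂ) • (single i i 1 + star (1 : ℂ) • single i j 1 + (1 : ℂ) • single j i 1
          + single j j 1))
        - (D + (1 / 2 : ℂ) • (single i i 1 + star (-1 : ℂ) • single i j 1
          + (-1 : ℂ) • single j i 1 + single j j 1))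
        + Complex.I • (D + (1 / 2 : ℂ) • (single i i 1 + star Complex.I • single i j 1
          + Complex.I • single j i 1 + single j j 1))
        - Complex.I • (D + (1 / 2 : ℂ) • (single i i 1 + star (-Complex.I) • single i j 1
          + (-Complex.I) • single j i 1 + single j j 1))) := by
      simp only [star_one, star_neg, Complex.star_def, Complex.conj_I]
      match_scalars <;> ring_nf <;> simp
      norm_num
    rw [h5]
    exact Sp.smul_mem _ (Sp.sub_mem (Sp.add_mem (Sp.sub_mem h1 h2) (Sp.smul_mem _ h3))
      (Sp.smul_mem _ h4))
  have hdiff : ∀ i j : m, single i i (1 : ℂ) - single j j 1 ∈ Sp := by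
    intro i j
    obtain ⟨I, hI, hi, hj⟩ := exists_finset_avoiding hcard hn i j
    have := Sp.sub_mem (hmem (isHalf_coord hcard hI hi)) (hmem (isHalf_coord hcard hI hj))
    rwa [add_sub_add_left_eq_sub] at this
  have hone : (1 : Matrix m m ℂ) ∈ Sp := by
    have : Nonempty m := Fintype.card_pos_iff.mp (by omega)
    obtain ⟨i⟩ := this
    obtain ⟨I, hI, hi, -⟩ := exists_finset_avoiding hcard hn i i
    have h := isHalf_coord hcard hI hi
    have := Sp.add_mem (hmem h) (hmem h.compl)
    rwa [add_sub_cancel] at this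
  have hdiag : ∀ i : m, single i i (1 : ℂ) ∈ Sp := by
    intro i
    have h1 : (Fintype.card m : ℂ) • single i i (1 : ℂ)
        = 1 + ∑ j, (single i i (1 : ℂ) - single j j 1) := by
      rw [Finset.sum_sub_distrib, sum_single_one, Finset.sum_const, Finset.card_univ,
        Nat.cast_smul_eq_nsmul]
      abel
    have h2 : (Fintype.card m : ℂ) ≠ 0 := by
      rw [hcard]; exact_mod_cast (by omega : 2 * n ≠ 0)
    have h3 := Sp.smul_mem (Fintype.card m : ℂ)⁻¹ (Sp.add_mem hone 
      (Sp.sum_mem (t := Finset.univ) fun j _ => hdiff i j))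
    rwa [← h1, smul_smul, inv_mul_cancel₀ h2, one_smul] at h3
  refine eq_top_iff.mpr fun X _ => ?_
  rw [matrix_eq_sum_single X]
  refine Sp.sum_mem fun i _ => Sp.sum_mem fun j _ => ?_
  have : single i j (X i j) = X i j • single i j (1 : ℂ) := by rw [smul_single, smul_eq_mul, mul_one]
  rw [this]
  refine Sp.smul_mem _ ?_
  by_cases h : i = j
  · rw [h]; exact hdiag j
  · exact hoff i j h

/-- Unital `*`-preserving linear maps that preserve the trace form. -/
structure IsTrPres (Φ : Matrix m m ℂ →ₗ[ℂ] Matrix m m ℂ) : Prop where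
  star : ∀ X, Φ Xᴴ = (Φ X)ᴴ
  one : Φ 1 = 1
  form : ∀ X Y, (Φ X * Φ Y).trace = (X * Y).trace

theorem IsTrPres.trace {Φ : Matrix m m ℂ →ₗ[ℂ] Matrix m m ℂ} (h : IsTrPres Φ) (X : Matrix m m ℂ) :
    (Φ X).trace = X.trace := by
  have := h.form X 1
  rwa [h.one, Matrix.mul_one, Matrix.mul_one] at this

/-- Maps of half-trace projections preserving the trace form extend linearly. -/
theorem exists_isTrPres {n : ℕ} (hcard : Fintype.card m = 2 * n) (hn : 1 ≤ n)
    {φ : Half m → Half m} (hsurj : Function.Surjective φ)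
    (htr : ∀ P Q, ((φ P).1 * (φ Q).1).trace = (P.1 * Q.1).trace) :
    ∃ Φ : Matrix m m ℂ →ₗ[ℂ] Matrix m m ℂ, IsTrPres Φ ∧ ∀ P : Half m, Φ P.1 = (φ P).1 := by
  have hspan := span_half hcard hn
  have hind : ∀ {C : Matrix m m ℂ → Prop}, (∀ P : Half m, C P.1) → C 0 →
      (∀ X Y, C X → C Y → C (X + Y)) → (∀ (a : ℂ) X, C X → C (a • X)) → ∀ X, C X := by
    intro C h1 h0 h2 h3 X
    have hX : X ∈ Submodule.span ℂ {P : Matrix m m ℂ | IsHalf P} := hspan ▸ Submodule.mem_top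
    induction hX using Submodule.span_induction with
    | mem x h => exact h1 ⟨x, h⟩
    | zero => exact h0
    | add x y _ _ hx hy => exact h2 x y hx hy
    | smul a x _ hx => exact h3 a x hx
  set L : (Half m →₀ ℂ) →ₗ[ℂ] Matrix m m ℂ := Finsupp.linearCombination ℂ fun P : Half m => P.1
    with hL
  set L' : (Half m →₀ ℂ) →ₗ[ℂ] Matrix m m ℂ :=
    Finsupp.linearCombination ℂ fun P : Half m => (φ P).1 with hL'
  have hLsurj : LinearMap.range L = ⊤ := by
    rw [hL, Finsupp.range_linearCombination, Subtype.range_coe_subtype, hspan]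
  have hLL : ∀ f (Q : Half m), (L' f * (φ Q).1).trace = (L f * Q.1).trace := by
    intro f Q
    induction f using Finsupp.induction_linear with
    | zero => simp
    | add f g hf hg => rw [map_add, map_add, Matrix.add_mul, Matrix.add_mul, trace_add, trace_add, hf, hg]
    | single P a =>
      rw [hL, hL', Finsupp.linearCombination_single, Finsupp.linearCombination_single,
        smul_mul_assoc, smul_mul_assoc, trace_smul, trace_smul, htr]
  have hker : ∀ f, L f = 0 → L' f = 0 := by
    intro f hf
    have h1 : ∀ Y, (L' f * Y).trace = 0 := by
      refine hind (fun Q => ?_) (by simp) (fun X Y hX hY => ?_) fun a X hX => ?_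
      · obtain ⟨Q₀, rfl⟩ := hsurj Q
        rw [hLL, hf, Matrix.zero_mul, trace_zero]
      · rw [Matrix.mul_add, trace_add, hX, hY, add_zero]
      · rw [mul_smul_comm, trace_smul, hX, smul_zero]
    exact Matrix.ext_iff_trace_mul_right.mpr fun Y => by rw [h1, Matrix.zero_mul, trace_zero]
  obtain ⟨g, hg⟩ := L.exists_rightInverse_of_surjective hLsurj
  have hΦ : ∀ P : Half m, (L'.comp g) P.1 = (φ P).1 := by
    intro P
    have h1 : L (g P.1 - Finsupp.single P 1) = 0 := by
      have := LinearMap.congr_fun hg P.1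
      rw [LinearMap.comp_apply, LinearMap.id_apply] at this
      rw [map_sub, this, hL, Finsupp.linearCombination_single, one_smul, sub_self]
    have h2 := hker _ h1
    rw [map_sub, sub_eq_zero] at h2
    rw [LinearMap.comp_apply, h2, hL', Finsupp.linearCombination_single, one_smul]
  refine ⟨L'.comp g, ⟨?_, ?_, ?_⟩, hΦ⟩
  · refine hind (fun P => ?_) (by simp) (fun X Y hX hY => ?_) fun a X hX => ?_
    · rw [P.2.herm, hΦ, (φ P).2.herm]
    · rw [conjTranspose_add, map_add, map_add, conjTranspose_add, hX, hY]
    · rw [conjTranspose_smul, map_smul, map_smul, conjTranspose_smul, hX]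
  · have : Nonempty m := Fintype.card_pos_iff.mp (by omega)
    obtain ⟨i⟩ := this
    obtain ⟨I, hI, hi, -⟩ := exists_finset_avoiding hcard hn i i
    obtain ⟨P, hP⟩ : ∃ P : Half m, True := ⟨⟨_, isHalf_coord hcard hI hi⟩, trivial⟩
    set Q : Half m := ⟨1 - P.1, P.2.compl⟩ with hQ
    have h0 : 1 - (φ P).1 - (φ Q).1 = 0 := by
      refine eq_zero_of_trace_sq ?_ ?_
      · rw [conjTranspose_sub, conjTranspose_sub, conjTranspose_one, (φ P).2.herm, (φ Q).2.herm]
      · have e1 : (1 - (φ P).1 - (φ Q).1) * (1 - (φ P).1 - (φ Q).1)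
            = 1 - (φ P).1 - (φ Q).1 + ((φ P).1 * (φ P).1 - (φ P).1) + ((φ Q).1 * (φ Q).1 - (φ Q).1)
              + (φ P).1 * (φ Q).1 + (φ Q).1 * (φ P).1 := by noncomm_ring
        have e2 : P.1 * Q.1 = 0 := by
          rw [hQ, Matrix.mul_sub, Matrix.mul_one, P.2.idem, sub_self]
        have e3 : Q.1 * P.1 = 0 := by
          rw [hQ, Matrix.sub_mul, Matrix.one_mul, P.2.idem, sub_self]
        rw [e1, (φ P).2.idem, (φ Q).2.idem, sub_self, sub_self, trace_add, trace_add, htr, htr, e2, e3]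
        have e4 := (φ P).2.tr
        have e5 := (φ Q).2.tr
        simp only [add_zero, trace_sub, trace_one, trace_zero]
        have : (Fintype.card m : ℂ) - (φ P).1.trace - (φ Q).1.trace = 0 := by
          linear_combination (-1 / 2 : ℂ) * e4 - (1 / 2 : ℂ) * e5
        rw [this, Complex.zero_re]
    have h1 : (1 : Matrix m m ℂ) = P.1 + Q.1 := by rw [hQ, add_sub_cancel]
    rw [h1, map_add, hΦ, hΦ, ← h1, eq_comm, ← sub_eq_zero, ← sub_sub]
    exact h0
  · have h1 : ∀ (P : Half m) Y, (L'.comp g P.1 * L'.comp g Y).trace = (P.1 * Y).trace := by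
      intro P
      refine hind (fun Q => ?_) (by simp) (fun X Y hX hY => ?_) fun a X hX => ?_
      · rw [hΦ, hΦ, htr]
      · rw [map_add, Matrix.mul_add, Matrix.mul_add, trace_add, trace_add, hX, hY]
      · rw [map_smul, mul_smul_comm, mul_smul_comm, trace_smul, trace_smul, hX]
    refine hind (fun P => h1 P) (by simp) (fun X Y hX hY Z => ?_) fun a X hX Z => ?_
    · rw [map_add, Matrix.add_mul, Matrix.add_mul, trace_add, trace_add, hX, hY]
    · rw [map_smul, smul_mul_assoc, smul_mul_assoc, trace_smul, trace_smul, hX]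

theorem exists_finset_maximal {n : ℕ} (hcard : Fintype.card m = 2 * n) (l : m → ℝ) :
    ∃ I : Finset m, I.card = n ∧ ∀ i ∈ I, ∀ j ∉ I, l j ≤ l i := by
  have hne : (Finset.powersetCard n (Finset.univ : Finset m)).Nonempty :=
    Finset.powersetCard_nonempty.mpr (by rw [Finset.card_univ]; omega)
  obtain ⟨I, hI, hmax⟩ := Finset.exists_max_image _ (fun J => ∑ i ∈ J, l i) hne
  have hIc := (Finset.mem_powersetCard.mp hI).2
  refine ⟨I, hIc, fun i hi j hj => ?_⟩
  have hj' : j ∉ I.erase i := fun h => hj (Finset.mem_of_mem_erase h)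
  have h := hmax (insert j (I.erase i)) (Finset.mem_powersetCard.mpr ⟨Finset.subset_univ _, by
    rw [Finset.card_insert_of_notMem hj', Finset.card_erase_add_one hi, hIc]⟩)
  rw [Finset.sum_insert hj', ← Finset.add_sum_erase I l hi] at h
  linarith

theorem mul_eq_zero_of_sum_sq {N : ℝ} (hN : 2 < N) {μ : m → ℝ} (habs : ∑ i, |μ i| ≤ 1)
    (hsq : ∑ i, μ i ^ 2 - (∑ i, μ i) ^ 2 / N = 1 - 1 / N) {i j : m} (hij : i ≠ j) :
    μ i * μ j = 0 := by
  set F : m → m → ℝ := fun i j =>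
    (1 - 1 / N) * (|μ i| * |μ j|) + μ i * μ j / N - if i = j then μ i ^ 2 else 0 with hF
  have hN0 : 0 < N := by linarith
  have hN1 : 1 / N < 1 / 2 := one_div_lt_one_div_of_lt (by norm_num) hN
  have hoff : ∀ i j, i ≠ j → (1 - 2 * (1 / N)) * (|μ i| * |μ j|) ≤ F i j := by
    intro i j h
    have h1 : -(|μ i| * |μ j|) ≤ μ i * μ j := by rw [← abs_mul]; exact neg_abs_le _
    have h2 : 0 ≤ 1 / N := by positivity
    simp only [hF, if_neg h, div_eq_mul_one_div (μ i * μ j)]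
    nlinarith [mul_le_mul_of_nonneg_right h1 h2]
  have hnn : ∀ i j, 0 ≤ F i j := by
    intro i j
    by_cases h : i = j
    · subst h
      simp only [hF, if_true, abs_mul_abs_self]
      have : (1 - 1 / N) * (μ i * μ i) + μ i * μ i / N - μ i ^ 2 = 0 := by ring
      rw [this]
    · refine le_trans (mul_nonneg (by linarith) (by positivity)) (hoff i j h)
  have hsum : ∑ i, ∑ j, F i j
      = (1 - 1 / N) * (∑ i, |μ i|) ^ 2 - (∑ i, μ i ^ 2 - (∑ i, μ i) ^ 2 / N) := by
    simp only [hF, Finset.sum_sub_distrib, Finset.sum_add_distrib, Finset.sum_ite_eq,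
      Finset.mem_univ, if_true, ← Finset.mul_sum, ← Finset.sum_mul, ← Finset.sum_div]
    ring
  have hle : ∑ i, ∑ j, F i j ≤ 0 := by
    rw [hsum, hsq]
    have h1 : 0 ≤ ∑ i, |μ i| := Finset.sum_nonneg fun i _ => abs_nonneg _
    have h2 : (∑ i, |μ i|) ^ 2 ≤ 1 := by nlinarith
    nlinarith
  have h1 : F i j ≤ ∑ i, ∑ j, F i j :=
    (Finset.single_le_sum (fun j _ => hnn i j) (Finset.mem_univ j)).trans
      (Finset.single_le_sum (f := fun i => ∑ j, F i j)
        (fun i _ => Finset.sum_nonneg fun j _ => hnn i j) (Finset.mem_univ i))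
  have h2 := (hoff i j hij).trans (h1.trans hle)
  rw [← abs_mul] at h2
  have h3 : |μ i * μ j| ≤ 0 := nonpos_of_mul_nonpos_right h2 (by linarith)
  exact abs_nonpos_iff.mp h3

theorem spectrum_cases {n : ℕ} (hcard : Fintype.card m = 2 * n) (hn : 1 ≤ n) {l : m → ℝ}
    (hl : ∑ i, l i = 1) (hl2 : ∑ i, l i ^ 2 = 1)
    (hsub : ∀ I : Finset m, I.card = n → ∑ i ∈ I, l i ≤ 1) :
    (∀ i, l i * l i = l i) ∨
      ∀ i, (2 / (Fintype.card m : ℝ) - l i) * (2 / (Fintype.card m : ℝ) - l i)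
        = 2 / (Fintype.card m : ℝ) - l i := by
  rcases hn.eq_or_lt with rfl | hn2
  · left
    have h1 : ∀ i, l i ≤ 1 := fun i => by simpa using hsub {i} (by simp)
    have h0 : ∀ i, 0 ≤ l i := fun i => by
      have := hsub (Finset.univ.erase i) (by simp [hcard])
      rw [← Finset.add_sum_erase _ l (Finset.mem_univ i)] at hl
      linarith
    have h2 : ∑ i, (l i - l i ^ 2) = 0 := by rw [Finset.sum_sub_distrib, hl, hl2, sub_self]
    have h3 := (Finset.sum_eq_zero_iff_of_nonneg fun i _ => by nlinarith [h0 i, h1 i]).mp h2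
    intro i
    have := h3 i (Finset.mem_univ i)
    linarith [sq (l i)]
  set N : ℝ := (Fintype.card m : ℝ) with hNdef
  have hN : 2 < N := by
    rw [hNdef, hcard]; exact_mod_cast (by omega : 2 < 2 * n)
  obtain ⟨I, hI, hIl⟩ := exists_finset_maximal hcard l
  obtain ⟨k, hk, hkmin⟩ := Finset.exists_min_image I l (Finset.card_pos.mp (by omega))
  set c := l k with hc
  have habs : ∑ i, |l i - c| ≤ 1 := by
    have e1 : ∑ i ∈ I, |l i - c| = ∑ i ∈ I, l i - n * c := by
      rw [Finset.sum_congr rfl fun i hi => abs_of_nonneg (sub_nonneg.mpr (hkmin i hi)),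
        Finset.sum_sub_distrib, Finset.sum_const, hI, nsmul_eq_mul]
    have e2 : ∑ i ∈ Iᶜ, |l i - c| = n * c - ∑ i ∈ Iᶜ, l i := by
      rw [Finset.sum_congr rfl fun i hi => abs_of_nonpos
          (sub_nonpos.mpr (hIl k hk i (Finset.mem_compl.mp hi))),
        Finset.sum_neg_distrib, Finset.sum_sub_distrib, Finset.sum_const, Finset.card_compl, hI, hcard,
        nsmul_eq_mul, show 2 * n - n = n by omega]
      ring
    have e3 := hsub I hI
    rw [← Finset.sum_add_sum_compl I] at hl ⊢
    rw [e1, e2]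
    linarith
  have hs : ∑ i, (l i - c) = 1 - N * c := by
    rw [Finset.sum_sub_distrib, hl, Finset.sum_const, Finset.card_univ, nsmul_eq_mul]
  have hq : ∑ i, (l i - c) ^ 2 = 1 - 2 * c + N * c ^ 2 := by
    simp only [sub_sq, Finset.sum_add_distrib, Finset.sum_sub_distrib, hl2, Finset.sum_const,
      Finset.card_univ, nsmul_eq_mul, ← Finset.sum_mul, ← Finset.mul_sum, hl]
    ring
  have hsq : ∑ i, (l i - c) ^ 2 - (∑ i, (l i - c)) ^ 2 / N = 1 - 1 / N := by
    rw [hs, hq]; field_simp; ring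
  have hprod : ∀ i j, i ≠ j → (l i - c) * (l j - c) = 0 :=
    fun i j h => mul_eq_zero_of_sum_sq (μ := fun i => l i - c) hN habs hsq h
  obtain ⟨t, ht⟩ : ∃ t, l t - c ≠ 0 := by
    by_contra! h
    simp only [h] at hsq
    simp at hsq
    rw [eq_comm, sub_eq_zero, eq_comm, inv_eq_one] at hsq
    linarith
  have hz : ∀ i, i ≠ t → l i - c = 0 := fun i h =>
    (mul_eq_zero.mp (hprod i t h)).resolve_right ht
  rw [Finset.sum_eq_single_of_mem t (Finset.mem_univ t) fun i _ h => hz i h] at hs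
  rw [Finset.sum_eq_single_of_mem t (Finset.mem_univ t) fun i _ h => by rw [hz i h]; ring] at hq
  have h1 : N * (l t - c) ^ 2 - (1 - N * c) ^ 2 = N - 1 := by rw [hq]; ring
  rw [← hs] at h1
  have h2 : (l t - c) ^ 2 = 1 := by
    have : (N - 1) * ((l t - c) ^ 2 - 1) = 0 := by linarith
    rcases mul_eq_zero.mp this with h | h <;> linarith
  rcases mul_self_eq_one_iff.mp ((sq _).symm.trans h2) with h | h
  · left
    have hc0 : c = 0 := by
      have : N * c = 0 := by linarith
      exact (mul_eq_zero.mp this).resolve_left (by linarith)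
    intro i
    by_cases hi : i = t
    · rw [hi, show l t = 1 by linarith]; norm_num
    · rw [show l i = 0 by linarith [hz i hi]]; norm_num
  · right
    have hc0 : 2 / N = c := by
      rw [div_eq_iff (by linarith)]; linarith
    intro i
    rw [hc0]
    by_cases hi : i = t
    · rw [hi, show l t = c - 1 by linarith]; ring
    · rw [show l i = c by linarith [hz i hi]]; ring

/-- Projections of rank one. -/
structure IsMinProj (p : Matrix m m ℂ) : Prop where
  herm : pᴴ = p
  idem : p * p = p
  tr : p.trace = 1

theorem trace_mul_re_nonneg {A B : Matrix m m ℂ} (hA : Aᴴ = A) (hA2 : A * A = A) (hB : Bᴴ = B)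
    (hB2 : B * B = B) : 0 ≤ (A * B).trace.re := by
  have h : ((B * A)ᴴ * (B * A)).trace = (A * B).trace := by
    rw [conjTranspose_mul, hA, hB, trace_mul_comm, ← Matrix.mul_assoc, Matrix.mul_assoc B A A, hA2,
      trace_mul_comm, ← Matrix.mul_assoc, hB2, trace_mul_comm]
  rw [← h, trace_conjTranspose_mul_self_re]
  positivity

theorem IsTrPres.isMinProj_or {n : ℕ} (hcard : Fintype.card m = 2 * n) (hn : 1 ≤ n)
    {φ : Half m → Half m} (hsurj : Function.Surjective φ)
    {Φ : Matrix m m ℂ →ₗ[ℂ] Matrix m m ℂ} (hΦ : IsTrPres Φ) (hφ : ∀ P : Half m, Φ P.1 = (φ P).1)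
    {p : Matrix m m ℂ} (hp : IsMinProj p) :
    IsMinProj (Φ p) ∨ IsMinProj ((2 / (Fintype.card m : ℂ)) • 1 - Φ p) := by
  have hX : (Φ p)ᴴ = Φ p := by rw [← hΦ.star, hp.herm]
  obtain ⟨V, l, hV, hVl⟩ := exists_conjDiag hX
  have hl : ∑ i, l i = 1 := by
    have := hΦ.trace p
    rw [hp.tr, hVl, trace_conjDiag hV] at this
    exact_mod_cast this
  have hl2 : ∑ i, l i ^ 2 = 1 := by
    have := hΦ.form p p
    rw [hp.idem, hp.tr, hVl, conjDiag_mul hV, trace_conjDiag hV] at this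
    simp only [sq]
    exact_mod_cast this
  have hsub : ∀ I : Finset m, I.card = n → ∑ i ∈ I, l i ≤ 1 := by
    intro I hI
    have hQ : IsHalf (conjDiag V fun i => if i ∈ I then (1 : ℂ) else 0) := by
      refine ⟨?_, ?_, ?_⟩
      · rw [conjDiag_conjTranspose]
        congr 1; ext i
        by_cases hi : i ∈ I <;> simp [hi]
      · rw [conjDiag_mul hV]
        congr 1; ext i
        by_cases hi : i ∈ I <;> simp [hi]
      · rw [trace_conjDiag hV, hcard]
        simp [hI]
    obtain ⟨Q, hQ'⟩ := hsurj ⟨_, hQ⟩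
    have h1 := hΦ.form p Q.1
    rw [hφ, hQ', hVl, conjDiag_mul hV, trace_conjDiag hV] at h1
    have h2 := trace_mul_re_nonneg hp.herm hp.idem Q.2.compl.herm Q.2.compl.idem
    rw [Matrix.mul_sub, Matrix.mul_one, trace_sub, hp.tr, ← h1] at h2
    have h3 : ∑ i, ((l i : ℂ) * if i ∈ I then (1 : ℂ) else 0) = ((∑ i ∈ I, l i : ℝ) : ℂ) := by
      simp
    rw [h3, Complex.sub_re, Complex.one_re, Complex.ofReal_re] at h2
    linarith
  have hN : (Fintype.card m : ℂ) ≠ 0 := by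
    rw [hcard]; exact_mod_cast (by omega : 2 * n ≠ 0)
  rcases spectrum_cases hcard hn hl hl2 hsub with h | h
  · left
    refine ⟨hX, ?_, by rw [hΦ.trace, hp.tr]⟩
    rw [hVl, conjDiag_mul hV]
    congr 1; ext i
    exact_mod_cast h i
  · right
    refine ⟨?_, ?_, ?_⟩
    · rw [conjTranspose_sub, conjTranspose_smul, conjTranspose_one, hX]
      simp
    · rw [hVl, ← conjDiag_const hV, conjDiag_sub, conjDiag_mul hV]
      congr 1; ext i
      have := congrArg (fun x : ℝ => (x : ℂ)) (h i)
      push_cast at this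
      exact this
    · rw [trace_sub, trace_smul, trace_one, hΦ.trace, hp.tr, smul_eq_mul, div_mul_cancel₀ _ hN]
      norm_num

/-- The projection onto the line spanned by a nonzero vector. -/
noncomputable def ray (u : m → ℂ) : Matrix m m ℂ := (star u ⬝ᵥ u)⁻¹ • vecMulVec u (star u)

theorem star_dotProduct_ne_zero {u : m → ℂ} (hu : u ≠ 0) : star u ⬝ᵥ u ≠ 0 := by
  rw [Ne, dotProduct_star_self_eq_zero]
  exact hu

theorem isMinProj_ray {u : m → ℂ} (hu : u ≠ 0) : IsMinProj (ray u) := by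
  have h := star_dotProduct_ne_zero hu
  refine ⟨?_, ?_, ?_⟩
  · rw [ray, conjTranspose_smul, conjTranspose_vecMulVec, star_star, star_inv₀, ← star_dotProduct_star,
      star_star]
  · rw [ray, smul_mul_smul_comm, vecMulVec_mul_vecMulVec, vecMulVec_smul, smul_smul, mul_assoc,
      inv_mul_cancel₀ h, mul_one]
  · rw [ray, trace_smul, trace_vecMulVec, dotProduct_comm u, smul_eq_mul, inv_mul_cancel₀ h]

theorem isPreconnected_compl_zero [Nonempty m] : IsPreconnected ({0}ᶜ : Set (m → ℂ)) := by
  refine (isConnected_compl_singleton_of_one_lt_rank (Module.lt_rank_of_lt_finrank (R := ℝ) ?_)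
    0).isPreconnected
  rw [Module.finrank_pi_fintype]
  have : 0 < Fintype.card m := Fintype.card_pos
  simp
  omega

theorem continuousOn_ray : ContinuousOn (ray : (m → ℂ) → Matrix m m ℂ) {0}ᶜ := by
  have h : Continuous fun u : m → ℂ => star u ⬝ᵥ u := continuous_star.dotProduct continuous_id
  have h' : Continuous fun u : m → ℂ => vecMulVec u (star u) :=
    continuous_id.matrix_vecMulVec continuous_star
  unfold ray
  exact (h.continuousOn.inv₀ fun u hu => star_dotProduct_ne_zero hu).smul h'.continuousOn

theorem trace_cube_compl {a : ℂ} {X : Matrix m m ℂ} (h : IsMinProj (a • 1 - X))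
    (ha : a * Fintype.card m = 2) : (X * X * X).trace = -a ^ 2 + 3 * a - 1 := by
  set Y := a • (1 : Matrix m m ℂ) - X with hY
  have hX : X = a • (1 : Matrix m m ℂ) - Y := by rw [hY]; abel
  have h1 : X * X = (a * a) • (1 : Matrix m m ℂ) + (1 - 2 * a) • Y := by
    rw [hX]
    simp only [Matrix.sub_mul, Matrix.mul_sub, h.idem, smul_mul_assoc, mul_smul_comm, Matrix.one_mul,
      Matrix.mul_one]
    module
  have h2 : X * X * X = (a * a * a) • (1 : Matrix m m ℂ) + (-3 * a ^ 2 + 3 * a - 1) • Y := by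
    rw [h1, hX]
    simp only [Matrix.add_mul, Matrix.mul_sub, h.idem, smul_mul_assoc, mul_smul_comm, Matrix.one_mul,
      Matrix.mul_one]
    module
  rw [h2, trace_add, trace_smul, trace_smul, trace_one, h.tr, smul_eq_mul, smul_eq_mul]
  linear_combination a ^ 2 * ha

theorem isMinProj_forall_or [Nonempty m] {a : ℂ} (ha : a * Fintype.card m = 2)
    (ha2 : a ≠ 2) (Φ : Matrix m m ℂ →ₗ[ℂ] Matrix m m ℂ)
    (h : ∀ p, IsMinProj p → IsMinProj (Φ p) ∨ IsMinProj (a • 1 - Φ p)) :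
    (∀ u : m → ℂ, u ≠ 0 → IsMinProj (Φ (ray u))) ∨
      ∀ u : m → ℂ, u ≠ 0 → IsMinProj (a • 1 - Φ (ray u)) := by
  by_contra! hcon
  obtain ⟨⟨u, hu, hu'⟩, v, hv, hv'⟩ := hcon
  have hu2 := (h _ (isMinProj_ray hu)).resolve_left hu'
  have hv2 := (h _ (isMinProj_ray hv)).resolve_right hv'
  have h1 : ∀ {X : Matrix m m ℂ}, IsMinProj X → (X * X * X).trace = 1 := fun hX => by
    rw [hX.idem, hX.idem, hX.tr]
  have hcont : ContinuousOn (fun w => (Φ (ray w) * Φ (ray w) * Φ (ray w)).trace)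
      ({0}ᶜ : Set (m → ℂ)) := by
    have h2 : ContinuousOn (fun w => Φ (ray w)) ({0}ᶜ : Set (m → ℂ)) :=
      Φ.continuous_of_finiteDimensional.comp_continuousOn continuousOn_ray
    have h3 : Continuous fun X : Matrix m m ℂ => (X * X * X).trace := by fun_prop
    exact h3.comp_continuousOn h2
  have hdisc : DiscreteTopology ({1, -a ^ 2 + 3 * a - 1} : Set ℂ) :=
    (Set.toFinite _).instDiscreteTopology
  have heq := isPreconnected_compl_zero.constant_of_mapsTo
    (T := ({1, -a ^ 2 + 3 * a - 1} : Set ℂ)) ⟨hdisc⟩ hcont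
    (fun w hw => (h _ (isMinProj_ray hw)).imp h1 fun h' => trace_cube_compl h' ha) hu hv
  simp only [trace_cube_compl hu2 ha, h1 hv2] at heq
  have hfac : (a - 1) * (a - 2) = 0 := by linear_combination -heq
  rcases mul_eq_zero.mp hfac with h4 | h4
  · rw [sub_eq_zero] at h4
    subst h4
    refine hu' ⟨?_, ?_, ?_⟩
    · have := hu2.herm
      rw [conjTranspose_sub, conjTranspose_smul, star_one, conjTranspose_one] at this
      exact sub_right_injective this
    · have := hu2.idem
      rw [one_smul, Matrix.sub_mul, Matrix.mul_sub (Φ (ray u)), Matrix.one_mul, Matrix.mul_one]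
        at this
      have h5 := congrArg (fun Z => Z - (1 - Φ (ray u)) + Φ (ray u)) this
      simpa using h5
    · have := hu2.tr
      rw [trace_sub, one_smul, trace_one] at this
      linear_combination -this + ha
  · exact ha2 (sub_eq_zero.mp h4)

/-- Trace-form-preserving extensions of `φ` are, up to complementation, maps that preserve
rank-one projections. -/
theorem exists_isTrPres_isMinProj {n : ℕ} (hcard : Fintype.card m = 2 * n) (hn : 1 ≤ n)
    {φ : Half m → Half m} (hsurj : Function.Surjective φ)
    (htr : ∀ P Q, ((φ P).1 * (φ Q).1).trace = (P.1 * Q.1).trace) :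
    ∃ Ψ : Matrix m m ℂ →ₗ[ℂ] Matrix m m ℂ, IsTrPres Ψ ∧
      (∀ u : m → ℂ, u ≠ 0 → IsMinProj (Ψ (ray u))) ∧
      ((∀ P : Half m, (φ P).1 = Ψ P.1) ∨ ∀ P : Half m, (φ P).1 = 1 - Ψ P.1) := by
  obtain ⟨Φ, hΦ, hφ⟩ := exists_isTrPres hcard hn hsurj htr
  have hne : Nonempty m := Fintype.card_pos_iff.mp (by omega)
  have hN : (Fintype.card m : ℂ) ≠ 0 := by
    rw [hcard]; exact_mod_cast (by omega : 2 * n ≠ 0)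
  set a : ℂ := 2 / (Fintype.card m : ℂ) with ha_def
  have ha : a * Fintype.card m = 2 := div_mul_cancel₀ _ hN
  have ha2 : a ≠ 2 := by
    intro h
    rw [h, hcard] at ha
    have : 2 * (2 * n) = 2 := by exact_mod_cast ha
    omega
  have hastar : star a = a := by simp [ha_def]
  rcases isMinProj_forall_or ha ha2 Φ fun p hp => hΦ.isMinProj_or hcard hn hsurj hφ hp with h | h
  · exact ⟨Φ, hΦ, h, Or.inl fun P => (hφ P).symm⟩
  · set Ψ : Matrix m m ℂ →ₗ[ℂ] Matrix m m ℂ :=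
      (traceLinearMap m ℂ ℂ).smulRight (a • (1 : Matrix m m ℂ)) - Φ with hΨ_def
    have hΨ : ∀ X, Ψ X = X.trace • a • (1 : Matrix m m ℂ) - Φ X := fun X => rfl
    refine ⟨Ψ, ⟨fun X => ?_, ?_, fun X Y => ?_⟩, fun u hu => ?_, Or.inr fun P => ?_⟩
    · rw [hΨ, hΨ, conjTranspose_sub, conjTranspose_smul, conjTranspose_smul, conjTranspose_one, hastar,
        trace_conjTranspose, hΦ.star]
    · rw [hΨ, hΦ.one, trace_one, smul_smul, mul_comm, ha]
      module
    · rw [hΨ, hΨ]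
      simp only [Matrix.sub_mul, Matrix.mul_sub, smul_mul_assoc, mul_smul_comm, Matrix.one_mul,
        Matrix.mul_one, trace_sub, trace_smul, trace_one, hΦ.form, hΦ.trace, smul_eq_mul]
      linear_combination (X.trace * Y.trace * a) * ha
    · rw [hΨ, (isMinProj_ray hu).tr, one_smul]
      exact h u hu
    · have h1 : P.1.trace * a = 1 := by
        have := P.2.tr
        rw [← mul_right_inj' hN]
        linear_combination P.1.trace * ha + this
      rw [hΨ, smul_smul, h1, one_smul, hφ, sub_sub_cancel]

theorem mul_eq_zero_of_trace {A B : Matrix m m ℂ} (hA : IsMinProj A) (hB : IsMinProj B)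
    (h : (A * B).trace = 0) : A * B = 0 := by
  have h1 : ((A * B)ᴴ * (A * B)).trace.re = 0 := by
    rw [conjTranspose_mul, hA.herm, hB.herm, trace_mul_comm, ← Matrix.mul_assoc, Matrix.mul_assoc A B B,
      hB.idem, trace_mul_comm, ← Matrix.mul_assoc, hA.idem, h, Complex.zero_re]
  rw [trace_conjTranspose_mul_self_re] at h1
  ext i j
  have h2 := (Finset.sum_eq_zero_iff_of_nonneg fun j _ =>
    Finset.sum_nonneg fun i _ => by positivity).mp h1 j (Finset.mem_univ j)
  have h3 := (Finset.sum_eq_zero_iff_of_nonneg fun i _ => by positivity).mp h2 i (Finset.mem_univ i)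
  simpa using h3

theorem conjDiag_single (V : Matrix m m ℂ) (k : m) :
    conjDiag V (Pi.single k 1) = vecMulVec (fun i => V i k) (star fun i => V i k) := by
  ext i j
  rw [conjDiag_apply, Finset.sum_eq_single_of_mem k (Finset.mem_univ k)]
  · simp [vecMulVec_apply]
  · intro b _ hb
    simp [hb]

theorem star_dotProduct_col {V : Matrix m m ℂ} (hV : Vᴴ * V = 1) (k : m) :
    star (fun i => V i k) ⬝ᵥ (fun i => V i k) = 1 := by
  have := congrFun (congrFun hV k) k
  rw [mul_apply, one_apply_eq] at this
  exact this

theorem conjDiag_single_eq_ray {V : Matrix m m ℂ} (hV : Vᴴ * V = 1) (k : m) :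
    ∃ u : m → ℂ, u ≠ 0 ∧ conjDiag V (Pi.single k 1) = ray u := by
  have h := star_dotProduct_col hV k
  refine ⟨fun i => V i k, ?_, ?_⟩
  · intro h0
    rw [h0, dotProduct_zero] at h
    exact zero_ne_one h
  · rw [conjDiag_single, ray, h, inv_one, one_smul]

theorem conjDiag_eq_sum (V : Matrix m m ℂ) (d : m → ℂ) :
    conjDiag V d = ∑ i, d i • conjDiag V (Pi.single i 1) := by
  ext k l
  simp only [Matrix.sum_apply, Matrix.smul_apply, conjDiag_single, conjDiag_apply, vecMulVec_apply, smul_eq_mul,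
    Pi.star_apply]
  exact Finset.sum_congr rfl fun i _ => by ring

theorem IsMinProj.exists_vec {F : Matrix m m ℂ} (hF : IsMinProj F) :
    ∃ f : m → ℂ, F = vecMulVec f (star f) := by
  obtain ⟨V, l, hV, hl⟩ := exists_conjDiag hF.herm
  have h1 := hF.idem
  rw [hl, conjDiag_mul hV] at h1
  have h2 : ∀ i, l i * l i = l i := fun i => by
    exact_mod_cast congrFun (conjDiag_injective hV h1) i
  have h3 : ∑ i, l i = 1 := by
    have := hF.tr
    rw [hl, trace_conjDiag hV] at this
    exact_mod_cast this
  have h01 : ∀ i, l i = 0 ∨ l i = 1 := fun i => by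
    have : l i * (l i - 1) = 0 := by linarith [h2 i]
    exact (mul_eq_zero.mp this).imp id fun h => by linarith
  obtain ⟨k, hk⟩ : ∃ k, l k = 1 := by
    by_contra! h
    rw [Finset.sum_eq_zero fun i _ => (h01 i).resolve_right (h i)] at h3
    exact zero_ne_one h3
  refine ⟨fun i => V i k, ?_⟩
  rw [hl, ← conjDiag_single]
  congr 1; ext i
  by_cases hi : i = k
  · rw [hi, hk]; simp
  · rw [← Finset.add_sum_erase _ l (Finset.mem_univ k), hk, add_eq_left,
      Finset.sum_eq_zero_iff_of_nonneg] at h3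
    · rw [h3 i (Finset.mem_erase.mpr ⟨hi, Finset.mem_univ i⟩)]; simp [hi]
    · intro j _
      rcases h01 j with h | h <;> rw [h]
      norm_num

/-- Trace-form-preserving Jordan `*`-homomorphisms. -/
structure IsJordan (Θ : Matrix m m ℂ →ₗ[ℂ] Matrix m m ℂ) : Prop where
  map_star : ∀ X, Θ Xᴴ = (Θ X)ᴴ
  form : ∀ X Y, (Θ X * Θ Y).trace = (X * Y).trace
  jordan : ∀ X Y, Θ (X * Y + Y * X) = Θ X * Θ Y + Θ Y * Θ X

theorem IsTrPres.map_sq {Ψ : Matrix m m ℂ →ₗ[ℂ] Matrix m m ℂ} (hΨ : IsTrPres Ψ)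
    (hmin : ∀ u : m → ℂ, u ≠ 0 → IsMinProj (Ψ (ray u))) {H : Matrix m m ℂ} (hH : Hᴴ = H) :
    Ψ (H * H) = Ψ H * Ψ H := by
  obtain ⟨V, l, hV, hl⟩ := exists_conjDiag hH
  have hq : ∀ i, IsMinProj (Ψ (conjDiag V (Pi.single i 1))) := fun i => by
    obtain ⟨u, hu, h⟩ := conjDiag_single_eq_ray hV i
    rw [h]; exact hmin u hu
  have horth : ∀ i j, i ≠ j →
      Ψ (conjDiag V (Pi.single i 1)) * Ψ (conjDiag V (Pi.single j 1)) = 0 := fun i j hij => by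
    refine mul_eq_zero_of_trace (hq i) (hq j) ?_
    rw [hΨ.form, conjDiag_mul hV, trace_conjDiag hV]
    refine Finset.sum_eq_zero fun k _ => ?_
    by_cases hk : k = i
    · subst hk; simp [hij]
    · simp [hk]
  rw [hl, conjDiag_mul hV, conjDiag_eq_sum V fun i => (l i : ℂ), conjDiag_eq_sum V, map_sum, map_sum,
    Finset.sum_mul_sum]
  refine Finset.sum_congr rfl fun i _ => ?_
  rw [Finset.sum_eq_single_of_mem i (Finset.mem_univ i)]
  · rw [map_smul, map_smul, smul_mul_smul_comm, (hq i).idem]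
  · intro j _ hj
    rw [map_smul, map_smul, smul_mul_smul_comm, horth i j hj.symm, smul_zero]

open ComplexStarModule in
theorem IsTrPres.isJordan {Ψ : Matrix m m ℂ →ₗ[ℂ] Matrix m m ℂ} (hΨ : IsTrPres Ψ)
    (hmin : ∀ u : m → ℂ, u ≠ 0 → IsMinProj (Ψ (ray u))) : IsJordan Ψ := by
  have h1 : ∀ H K : Matrix m m ℂ, Hᴴ = H → Kᴴ = K →
      Ψ (H * K + K * H) = Ψ H * Ψ K + Ψ K * Ψ H := by
    intro H K hH hK
    have h := hΨ.map_sq hmin (H := H + K) (by rw [conjTranspose_add, hH, hK])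
    have e1 : (H + K) * (H + K) = H * H + K * K + (H * K + K * H) := by noncomm_ring
    have e2 : (Ψ H + Ψ K) * (Ψ H + Ψ K)
      = Ψ H * Ψ H + Ψ K * Ψ K + (Ψ H * Ψ K + Ψ K * Ψ H) := by noncomm_ring
    rw [e1, map_add, map_add Ψ (H * H), hΨ.map_sq hmin hH, hΨ.map_sq hmin hK, map_add Ψ H, e2] at h
    exact add_left_cancel h
  have hre : ∀ X : Matrix m m ℂ, ∃ H K : Matrix m m ℂ, Hᴴ = H ∧ Kᴴ = K ∧ X = H + Complex.I • K :=
    fun X => ⟨realPart X, imaginaryPart X, (realPart X).2, (imaginaryPart X).2,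
      (realPart_add_I_smul_imaginaryPart X).symm⟩
  refine ⟨hΨ.star, hΨ.form, fun X Y => ?_⟩
  obtain ⟨H, K, hH, hK, rfl⟩ := hre X
  obtain ⟨H', K', hH', hK', rfl⟩ := hre Y
  have e : ∀ A B C D : Matrix m m ℂ, (A + Complex.I • B) * (C + Complex.I • D)
      + (C + Complex.I • D) * (A + Complex.I • B)
      = (A * C + C * A) + Complex.I • (A * D + D * A) + Complex.I • (B * C + C * B)
        - (B * D + D * B) := by
    intro A B C D
    simp only [Matrix.add_mul, Matrix.mul_add, smul_mul_assoc, mul_smul_comm]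
    linear_combination (norm := module) Complex.I_mul_I • (B * D + D * B)
  rw [map_add Ψ H, map_add Ψ H', map_smul, map_smul, e, e, map_sub, map_add Ψ (_ + _), map_add Ψ (_ + _),
    map_smul, map_smul, h1 _ _ hH hH', h1 _ _ hH hK', h1 _ _ hK hH', h1 _ _ hK hK']

section Single

variable {Θ : Matrix m m ℂ →ₗ[ℂ] Matrix m m ℂ}

theorem single_anticomm_apply (A : Matrix m m ℂ) (i k l : m) :
    ((single i i 1 * A + A * single i i 1 : Matrix m m ℂ)) k l
      = ((if k = i then 1 else 0) + if l = i then 1 else 0) * A k l := by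
  rw [Matrix.add_apply, add_mul]
  congr 1
  · by_cases h : k = i
    · subst h; simp
    · simp [h]
  · by_cases h : l = i
    · subst h; simp
    · simp [h]

theorem IsJordan.single_apply_eq_zero (hΘ : IsJordan Θ) (hdiag : ∀ i, Θ (single i i 1) = single i i 1)
    {i j : m} (hij : i ≠ j) {k l : m} (h1 : ¬(k = i ∧ l = j)) (h2 : ¬(k = j ∧ l = i)) :
    Θ (single i j 1) k l = 0 := by
  have e1 := hΘ.jordan (single i i 1) (single i j 1)
  have e2 := hΘ.jordan (single j j 1) (single i j 1)
  rw [hdiag, single_mul_single_same, single_mul_single_of_ne _ _ _ _ hij.symm, mul_one, add_zero] at e1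
  rw [hdiag, single_mul_single_of_ne _ _ _ _ hij.symm, single_mul_single_same, mul_one, zero_add] at e2
  have e1 := congrFun (congrFun e1 k) l
  have e2 := congrFun (congrFun e2 k) l
  rw [single_anticomm_apply] at e1 e2
  grind

theorem IsJordan.single_mul_eq_zero (hΘ : IsJordan Θ)
    (hdiag : ∀ i, Θ (single i i 1) = single i i 1)
    {i j : m} (hij : i ≠ j) : Θ (single i j 1) i j * Θ (single i j 1) j i = 0 := by
  have e := hΘ.jordan (single i j 1) (single i j 1)
  rw [single_mul_single_of_ne _ _ _ _ hij.symm, add_zero, map_zero] at e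
  have e := congrFun (congrFun e i) i
  rw [Matrix.add_apply, mul_apply, Finset.sum_eq_single_of_mem j (Finset.mem_univ j) ?_, Matrix.zero_apply] at e
  · linear_combination (-1 / 2 : ℂ) * e
  · intro l _ hl
    rw [hΘ.single_apply_eq_zero hdiag hij (fun h => hl h.2) (fun h => hij h.1), zero_mul]

theorem IsJordan.single_swap (hΘ : IsJordan Θ) (i j k l : m) :
    Θ (single j i 1) l k = star (Θ (single i j 1) k l) := by
  have := hΘ.map_star (single i j 1)
  rw [conjTranspose_single, star_one] at this
  rw [this, conjTranspose_apply]

theorem IsJordan.single_norm (hΘ : IsJordan Θ) (hdiag : ∀ i, Θ (single i i 1) = single i i 1)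
    {i j : m} (hij : i ≠ j) :
    Θ (single i j 1) i j * star (Θ (single i j 1) i j)
      + Θ (single i j 1) j i * star (Θ (single i j 1) j i) = 1 := by
  have e := hΘ.form (single i j 1) (single j i 1)
  rw [single_mul_single_same, trace_single_eq_same, mul_one, trace] at e
  refine Eq.trans ?_ e
  rw [← Finset.sum_subset (Finset.subset_univ {i, j}), Finset.sum_pair hij]
  · simp only [diag_apply, mul_apply]
    rw [Finset.sum_eq_single_of_mem j (Finset.mem_univ j),
      Finset.sum_eq_single_of_mem i (Finset.mem_univ i), hΘ.single_swap i j i j,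
      hΘ.single_swap i j j i]
    · intro l _ hl
      rw [hΘ.single_apply_eq_zero hdiag hij (fun h => hij h.1.symm) (fun h => hl h.2), zero_mul]
    · intro l _ hl
      rw [hΘ.single_apply_eq_zero hdiag hij (fun h => hl h.2) (fun h => hij h.1), zero_mul]
  · intro k _ hk
    simp only [Finset.mem_insert, Finset.mem_singleton, not_or] at hk
    rw [diag_apply, mul_apply]
    refine Finset.sum_eq_zero fun l _ => ?_
    rw [hΘ.single_apply_eq_zero hdiag hij (fun h => hk.1 h.1) (fun h => hk.2 h.1), zero_mul]

theorem IsJordan.single_chain (hΘ : IsJordan Θ) (hdiag : ∀ i, Θ (single i i 1) = single i i 1)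
    {i j k : m} (hij : i ≠ j) (hjk : j ≠ k) (hik : i ≠ k) :
    Θ (single i k 1) i k = Θ (single i j 1) i j * Θ (single j k 1) j k := by
  have e := hΘ.jordan (single i j 1) (single j k 1)
  rw [single_mul_single_same, single_mul_single_of_ne _ _ _ _ hik.symm, add_zero, mul_one] at e
  rw [e, Matrix.add_apply, mul_apply, mul_apply, Finset.sum_eq_single_of_mem j (Finset.mem_univ j),
    Finset.sum_eq_zero, add_zero]
  · intro l _
    rw [hΘ.single_apply_eq_zero hdiag hjk (fun h => hij h.1) (fun h => hik h.1), zero_mul]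
  · intro l _ hl
    rw [hΘ.single_apply_eq_zero hdiag hij (fun h => hl h.2) (fun h => hij h.1), zero_mul]

theorem IsJordan.exists_diagonal (hΘ : IsJordan Θ) (hdiag : ∀ i, Θ (single i i 1) = single i i 1)
    (o : m) (h : ∀ j, o ≠ j → Θ (single o j 1) j o = 0) :
    ∃ d : m → ℂ, (∀ i, d i * star (d i) = 1) ∧
      ∀ X, Θ X = diagonal d * X * (diagonal d)ᴴ := by
  set d : m → ℂ := fun i => Θ (single i o 1) i o with hd
  have hstar : ∀ j, Θ (single o j 1) o j = star (d j) := fun j => hΘ.single_swap j o j o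
  have hdo : d o = 1 := by simp only [hd, hdiag, single_apply_same]
  have hnorm : ∀ i, d i * star (d i) = 1 := by
    intro i
    by_cases hi : o = i
    · rw [← hi, hdo, star_one, mul_one]
    · have := hΘ.single_norm hdiag hi
      rw [h i hi, zero_mul, add_zero, hstar, star_star, mul_comm] at this
      exact this
  have halpha : ∀ i j, Θ (single i j 1) i j = d i * star (d j) := by
    intro i j
    by_cases hij : i = j
    · subst hij
      rw [hdiag, single_apply_same, hnorm]
    by_cases hi : o = i
    · subst hi
      rw [hstar, hdo, one_mul]
    by_cases hj : o = j
    · subst hj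
      rw [hdo, star_one, mul_one]
    · rw [hΘ.single_chain hdiag (Ne.symm hi) hj hij, hstar]
  have hsingle : ∀ i j, Θ (single i j 1) = single i j (d i * star (d j)) := by
    intro i j
    by_cases hij : i = j
    · subst hij
      rw [hdiag, hnorm]
    have hne : d i * star (d j) ≠ 0 := by
      intro h0
      have : (d i * star (d i)) * (d j * star (d j)) = 0 := by
        linear_combination (star (d i) * d j) * h0
      rw [hnorm, hnorm, mul_one] at this
      exact one_ne_zero this
    ext k l
    by_cases h1 : k = i ∧ l = j
    · rw [h1.1, h1.2, single_apply_same, halpha]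
    · rw [single_apply_of_ne _ _ _ _ _ fun h => h1 ⟨h.1.symm, h.2.symm⟩]
      by_cases h2 : k = j ∧ l = i
      · have := hΘ.single_mul_eq_zero hdiag hij
        rw [halpha] at this
        rw [h2.1, h2.2]
        exact (mul_eq_zero.mp this).resolve_left hne
      · exact hΘ.single_apply_eq_zero hdiag hij h1 h2
  refine ⟨d, hnorm, fun X => ?_⟩
  have hX : Θ X = ∑ i, ∑ j, X i j • single i j (d i * star (d j)) := by
    conv_lhs => rw [matrix_eq_sum_single X, map_sum]
    refine Finset.sum_congr rfl fun i _ => ?_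
    rw [map_sum]
    refine Finset.sum_congr rfl fun j _ => ?_
    rw [← hsingle, ← map_smul, smul_single, smul_eq_mul, mul_one]
  rw [hX, matrix_eq_sum_single (diagonal d * X * (diagonal d)ᴴ)]
  refine Finset.sum_congr rfl fun i _ => Finset.sum_congr rfl fun j _ => ?_
  rw [smul_single, diagonal_conjTranspose, mul_diagonal, diagonal_mul, Pi.star_apply, smul_eq_mul]
  congr 1
  ring

theorem IsJordan.transpose (hΘ : IsJordan Θ) :
    IsJordan ((transposeLinearEquiv m m ℂ ℂ).toLinearMap ∘ₗ Θ) where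
  map_star X := by
    change (Θ Xᴴ)ᵀ = (Θ X)ᵀᴴ
    rw [hΘ.map_star]
    rfl
  form X Y := by
    change ((Θ X)ᵀ * (Θ Y)ᵀ).trace = _
    rw [← transpose_mul, trace_transpose, trace_mul_comm, hΘ.form]
  jordan X Y := by
    change (Θ (X * Y + Y * X))ᵀ = (Θ X)ᵀ * (Θ Y)ᵀ + (Θ Y)ᵀ * (Θ X)ᵀ
    rw [hΘ.jordan, transpose_add, transpose_mul, transpose_mul, add_comm]

theorem IsJordan.eq_conj_of_single (hΘ : IsJordan Θ) [Nonempty m]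
    (hdiag : ∀ i, Θ (single i i 1) = single i i 1) :
    ∃ D : Matrix m m ℂ, Dᴴ * D = 1 ∧ ((∀ X, Θ X = D * X * Dᴴ) ∨ ∀ X, Θ X = D * Xᵀ * Dᴴ) := by
  obtain ⟨o⟩ := ‹Nonempty m›
  have hunit : ∀ d : m → ℂ, (∀ i, d i * star (d i) = 1) → (diagonal d)ᴴ * diagonal d = 1 := by
    intro d hd
    rw [diagonal_conjTranspose, diagonal_mul_diagonal, ← diagonal_one]
    congr 1; ext i
    rw [Pi.star_apply, mul_comm, hd]
  have hdiag' : ∀ i, ((transposeLinearEquiv m m ℂ ℂ).toLinearMap ∘ₗ Θ) (single i i 1)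
      = single i i 1 := by
    intro i
    simp [hdiag]
  by_cases h : ∀ j, o ≠ j → Θ (single o j 1) j o = 0
  · obtain ⟨d, hd, hX⟩ := hΘ.exists_diagonal hdiag o h
    exact ⟨_, hunit d hd, Or.inl hX⟩
  · push Not at h
    obtain ⟨k, hk, hk0⟩ := h
    have hk1 : Θ (single o k 1) o k = 0 :=
      (mul_eq_zero.mp (hΘ.single_mul_eq_zero hdiag hk)).resolve_right hk0
    have h' : ∀ j, o ≠ j →
        ((transposeLinearEquiv m m ℂ ℂ).toLinearMap ∘ₗ Θ) (single o j 1) j o = 0 := by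
      intro j hj
      change Θ (single o j 1) o j = 0
      by_cases hjk : k = j
      · rw [← hjk, hk1]
      · rw [hΘ.single_chain hdiag hk hjk hj, hk1, zero_mul]
    obtain ⟨d, hd, hX⟩ := hΘ.transpose.exists_diagonal hdiag' o h'
    refine ⟨diagonal (star d), hunit _ fun i => ?_, Or.inr fun X => ?_⟩
    · rw [Pi.star_apply, star_star, mul_comm, hd]
    · have := congrArg Matrix.transpose (hX X)
      rw [transpose_mul, transpose_mul, diagonal_transpose, diagonal_conjTranspose, diagonal_transpose]
        at this
      rw [diagonal_conjTranspose, star_star, Matrix.mul_assoc, ← this]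
      rfl

end Single

theorem exists_unitary_single {F : m → Matrix m m ℂ} (hF : ∀ i, IsMinProj (F i))
    (horth : ∀ i j, i ≠ j → (F i * F j).trace = 0) :
    ∃ W : Matrix m m ℂ, Wᴴ * W = 1 ∧ ∀ i, F i = W * single i i 1 * Wᴴ := by
  choose f hf using fun i => (hF i).exists_vec
  refine ⟨of fun k i => f i k, ?_, fun i => ?_⟩
  · ext i j
    have e : ((of fun k i => f i k)ᴴ * (of fun k i => f i k)) i j = star (f i) ⬝ᵥ f j := rfl
    rw [e]
    by_cases hij : i = j
    · subst hij
      have := (hF i).tr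
      rw [hf, trace_vecMulVec, dotProduct_comm] at this
      rw [this, one_apply_eq]
    · have := horth i j hij
      rw [hf, hf, vecMulVec_mul_vecMulVec, trace_vecMulVec, dotProduct_smul, dotProduct_comm (f i),
        star_dotProduct (f j), smul_eq_mul] at this
      rw [one_apply_ne hij]
      rcases mul_eq_zero.mp this with h | h
      · exact h
      · exact star_eq_zero.mp h
  · have e := conjDiag_single (of fun k i => f i k) i
    rw [conjDiag, diagonal_single] at e
    rw [e, hf]
    rfl

/-- Trace-form-preserving maps that preserve rank-one projections are implemented by unitaries. -/
theorem IsTrPres.eq_conj [Nonempty m] {Ψ : Matrix m m ℂ →ₗ[ℂ] Matrix m m ℂ} (hΨ : IsTrPres Ψ)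
    (hmin : ∀ u : m → ℂ, u ≠ 0 → IsMinProj (Ψ (ray u))) :
    ∃ W : Matrix m m ℂ, Wᴴ * W = 1 ∧ ((∀ X, Ψ X = W * X * Wᴴ) ∨ ∀ X, Ψ X = W * Xᵀ * Wᴴ) := by
  have hJ := hΨ.isJordan hmin
  have hF : ∀ i : m, IsMinProj (Ψ (single i i 1)) := by
    intro i
    obtain ⟨u, hu, h⟩ := conjDiag_single_eq_ray (V := (1 : Matrix m m ℂ)) (by simp) i
    rw [conjDiag, diagonal_single, conjTranspose_one, Matrix.one_mul, Matrix.mul_one] at h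
    rw [h]
    exact hmin u hu
  obtain ⟨W, hW, hWF⟩ := exists_unitary_single hF fun i j hij => by
    rw [hΨ.form, single_mul_single_of_ne _ _ _ _ hij, trace_zero]
  have hW' : W * Wᴴ = 1 := mul_eq_one_comm.mp hW
  set Θ : Matrix m m ℂ →ₗ[ℂ] Matrix m m ℂ :=
    LinearMap.mulRight ℂ W ∘ₗ LinearMap.mulLeft ℂ Wᴴ ∘ₗ Ψ with hΘ_def
  have hΘ : ∀ X, Θ X = Wᴴ * Ψ X * W := fun X => rfl
  have hmul : ∀ A B : Matrix m m ℂ, Wᴴ * A * W * (Wᴴ * B * W) = Wᴴ * (A * B) * W := by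
    intro A B
    calc _ = Wᴴ * A * (W * Wᴴ) * B * W := by simp only [Matrix.mul_assoc]
      _ = _ := by rw [hW', Matrix.mul_one, Matrix.mul_assoc Wᴴ]
  have hJΘ : IsJordan Θ := by
    refine ⟨fun X => ?_, fun X Y => ?_, fun X Y => ?_⟩
    · rw [hΘ, hΘ, hΨ.star, conjTranspose_mul, conjTranspose_mul, conjTranspose_conjTranspose,
        Matrix.mul_assoc]
    · rw [hΘ, hΘ, hmul, trace_mul_comm, ← Matrix.mul_assoc, hW', Matrix.one_mul, hΨ.form]
    · rw [hΘ, hΘ, hΘ, hmul, hmul, hJ.jordan, Matrix.mul_add, Matrix.add_mul]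
  have hdiag : ∀ i, Θ (single i i 1) = single i i 1 := by
    intro i
    rw [hΘ, hWF]
    calc _ = (Wᴴ * W) * single i i 1 * (Wᴴ * W) := by simp only [Matrix.mul_assoc]
      _ = _ := by rw [hW, Matrix.one_mul, Matrix.mul_one]
  have hback : ∀ X, Ψ X = W * Θ X * Wᴴ := by
    intro X
    calc Ψ X = (W * Wᴴ) * Ψ X * (W * Wᴴ) := by rw [hW', Matrix.one_mul, Matrix.mul_one]
      _ = _ := by rw [hΘ]; simp only [Matrix.mul_assoc]
  obtain ⟨D, hD, h⟩ := hJΘ.eq_conj_of_single hdiag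
  refine ⟨W * D, ?_, h.imp (fun h X => ?_) fun h X => ?_⟩
  · calc _ = Dᴴ * (Wᴴ * W) * D := by rw [conjTranspose_mul]; simp only [Matrix.mul_assoc]
      _ = _ := by rw [hW, Matrix.mul_one, hD]
  · rw [hback, h, conjTranspose_mul]; simp only [Matrix.mul_assoc]
  · rw [hback, h, conjTranspose_mul]; simp only [Matrix.mul_assoc]

theorem lpnorm_eq_dp (p : ℝ) {P Q : Matrix m m ℂ} (hP : Pᴴ = P) (hQ : Qᴴ = Q) :
    lpnorm p (P - Q) = (dp p P Q / Fintype.card m) ^ (1 / p) := by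
  rw [lpnorm, specSum_eigenvalues (fun x => x ^ (p / 2)), conjTranspose_sub, hP, hQ, dp]

theorem dp_eq_of_lpnorm_eq [Nonempty m] {p : ℝ} (hp : 0 < p) {P Q P' Q' : Matrix m m ℂ} (hP : Pᴴ = P)
    (hQ : Qᴴ = Q) (hP' : P'ᴴ = P') (hQ' : Q'ᴴ = Q') (h : lpnorm p (P - Q) = lpnorm p (P' - Q')) :
    dp p P Q = dp p P' Q' := by
  have hN : (0 : ℝ) < Fintype.card m := Nat.cast_pos.mpr Fintype.card_pos
  rw [lpnorm_eq_dp p hP hQ, lpnorm_eq_dp p hP' hQ', Real.rpow_left_inj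
    (div_nonneg (dp_nonneg hP hQ p) hN.le) (div_nonneg (dp_nonneg hP' hQ' p) hN.le)
    (one_div_pos.mpr hp).ne'] at h
  exact (div_left_inj' hN.ne').mp h

/-- The correspondence `P ↦ 2 • P - 1` between half-trace projections and symmetries. -/
noncomputable def halfEquivSymm : Half m ≃ Symm m where
  toFun P := ⟨(2 : ℂ) • P.1 - 1, by
    refine ⟨?_, ?_, ?_⟩
    · rw [conjTranspose_sub, conjTranspose_smul, P.2.herm, conjTranspose_one]
      simp
    · simp only [Matrix.sub_mul, Matrix.mul_sub, smul_mul_assoc, mul_smul_comm, P.2.idem, Matrix.one_mul,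
        Matrix.mul_one]
      module
    · rw [trace_sub, trace_smul, smul_eq_mul, P.2.tr, trace_one, sub_self]⟩
  invFun S := ⟨(1 / 2 : ℂ) • (1 + S.1), by
    refine ⟨?_, ?_, ?_⟩
    · rw [conjTranspose_smul, conjTranspose_add, S.2.herm, conjTranspose_one]
      simp
    · simp only [Matrix.add_mul, Matrix.mul_add, smul_mul_assoc, mul_smul_comm, S.2.sq, Matrix.one_mul,
        Matrix.mul_one]
      module
    · rw [trace_smul, trace_add, S.2.tr, trace_one, smul_eq_mul]
      ring⟩
  left_inv P := Subtype.ext (by dsimp only; module)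
  right_inv S := Subtype.ext (by dsimp only; module)

theorem halfEquivSymm_coe (P : Half m) : (halfEquivSymm P).1 = (2 : ℂ) • P.1 - 1 := rfl

theorem dp_halfEquivSymm (p : ℝ) (P Q : Half m) :
    dp p (halfEquivSymm P).1 (halfEquivSymm Q).1 = (4 : ℝ) ^ (p / 2) * dp p P.1 Q.1 := by
  obtain ⟨V, a, hV, ha, h, -, -, hdp⟩ := exists_diff_sq P.2.herm Q.2.herm
  have h4 : ((halfEquivSymm P).1 - (halfEquivSymm Q).1) * ((halfEquivSymm P).1 - (halfEquivSymm Q).1)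
      = conjDiag V fun i => ((4 * a i : ℝ) : ℂ) := by
    have e : (halfEquivSymm P).1 - (halfEquivSymm Q).1 = (2 : ℂ) • (P.1 - Q.1) := by
      rw [halfEquivSymm_coe, halfEquivSymm_coe]; module
    rw [e, smul_mul_smul_comm, h, conjDiag_smul]
    congr 1; ext i
    push_cast
    norm_num
  rw [hdp, dp, h4, specSum_conjDiag _ hV, Finset.mul_sum]
  exact Finset.sum_congr rfl fun i _ => Real.mul_rpow (by norm_num) (ha i)

theorem trace_mul_im {A B : Matrix m m ℂ} (hA : Aᴴ = A) (hB : Bᴴ = B) : (A * B).trace.im = 0 := by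
  refine Complex.conj_eq_iff_im.mp ?_
  rw [starRingEnd_apply, ← trace_conjTranspose, conjTranspose_mul, hA, hB, trace_mul_comm]

theorem trace_eq_of_dp_eq {p : ℝ} (hp : 0 < p) {φ : Half m → Half m} (hsurj : Function.Surjective φ)
    (hφ : ∀ P Q, dp p (φ P).1 (φ Q).1 = dp p P.1 Q.1) (P Q : Half m) :
    ((φ P).1 * (φ Q).1).trace = (P.1 * Q.1).trace := by
  have hinj : Function.Injective φ := by
    intro A B hAB
    refine Subtype.ext (eq_of_dp_eq_zero hp A.2.herm B.2.herm ?_)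
    rw [← hφ, hAB, dp_self hp (φ B).2.herm]
  have hbij : Function.Bijective φ := ⟨hinj, hsurj⟩
  set ψ : Equiv.Perm (Symm m) :=
    (halfEquivSymm.symm.trans (Equiv.ofBijective φ hbij)).trans halfEquivSymm with hψ_def
  have hψ : ∀ A, ψ (halfEquivSymm A) = halfEquivSymm (φ A) := fun A => by
    rw [hψ_def, Equiv.trans_apply, Equiv.trans_apply, Equiv.symm_apply_apply, Equiv.ofBijective_apply]
  have hpres : PresDp p ψ := by
    intro x y
    obtain ⟨A, rfl⟩ := halfEquivSymm.surjective x
    obtain ⟨B, rfl⟩ := halfEquivSymm.surjective y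
    rw [hψ, hψ, dp_halfEquivSymm, dp_halfEquivSymm, hφ]
  have h := hpres.trace_eq hp (halfEquivSymm P) (halfEquivSymm Q)
  rw [hψ, hψ] at h
  have key : ∀ A B : Half m, ((halfEquivSymm A).1 * (halfEquivSymm B).1).trace
      = 4 * (A.1 * B.1).trace - Fintype.card m := by
    intro A B
    rw [halfEquivSymm_coe, halfEquivSymm_coe]
    simp only [Matrix.sub_mul, Matrix.mul_sub, smul_mul_assoc, mul_smul_comm, Matrix.one_mul,
      Matrix.mul_one, trace_sub, trace_smul, trace_one, smul_eq_mul]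
    linear_combination -A.2.tr - B.2.tr
  rw [key, key] at h
  refine Complex.ext ?_ ?_
  · simpa using h
  · rw [trace_mul_im (φ P).2.herm (φ Q).2.herm, trace_mul_im P.2.herm Q.2.herm]

/-- The classification of surjective maps of half-trace projections preserving `dp`. -/
theorem exists_unitary_of_dp_eq {n : ℕ} (hcard : Fintype.card m = 2 * n) (hn : 1 ≤ n) {p : ℝ}
    (hp : 0 < p) {φ : Half m → Half m} (hsurj : Function.Surjective φ)
    (hφ : ∀ P Q, dp p (φ P).1 (φ Q).1 = dp p P.1 Q.1) :
    ∃ W ∈ unitaryGroup m ℂ,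
      (∀ P : Half m, (φ P).1 = W * P.1 * Wᴴ) ∨ (∀ P : Half m, (φ P).1 = W * P.1ᵀ * Wᴴ) ∨
      (∀ P : Half m, (φ P).1 = 1 - W * P.1 * Wᴴ) ∨ ∀ P : Half m, (φ P).1 = 1 - W * P.1ᵀ * Wᴴ := by
  have hne : Nonempty m := Fintype.card_pos_iff.mp (by omega)
  obtain ⟨Ψ, hΨ, hmin, h⟩ :=
    exists_isTrPres_isMinProj hcard hn hsurj (trace_eq_of_dp_eq hp hsurj hφ)
  obtain ⟨W, hW, hΨW⟩ := hΨ.eq_conj hmin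
  refine ⟨W, mem_unitaryGroup_iff'.mpr hW, ?_⟩
  rcases h with h | h <;> rcases hΨW with h' | h'
  · exact Or.inl fun P => by rw [h, h']
  · exact Or.inr (Or.inl fun P => by rw [h, h'])
  · exact Or.inr (Or.inr (Or.inl fun P => by rw [h, h']))
  · exact Or.inr (Or.inr (Or.inr fun P => by rw [h, h']))

theorem isHalf_iff {n : ℕ} {P : Matrix (Fin (2 * n)) (Fin (2 * n)) ℂ} :
    IsHalf P ↔ Pᴴ = P ∧ P * P = P ∧ P.trace = (n : ℂ) := by
  have h : 2 * P.trace = (Fintype.card (Fin (2 * n)) : ℂ) ↔ P.trace = (n : ℂ) := by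
    rw [Fintype.card_fin, Nat.cast_mul, Nat.cast_two, mul_right_inj' two_ne_zero]
  exact ⟨fun ⟨h1, h2, h3⟩ => ⟨h1, h2, h.mp h3⟩, fun ⟨h1, h2, h3⟩ => ⟨h1, h2, h.mpr h3⟩⟩

end HalfProj

open HalfProj in
/-- Every surjective `L^p`-isometry of the set of trace-`1/2` projections of
`M_{2n}(ℂ)` is of the form `P ↦ φ'(P)` or `P ↦ I − φ'(P)`, where `φ'` is a
*-automorphism (`P ↦ WPWᴴ`) or a *-anti-automorphism (`P ↦ WPᵀWᴴ`). -/
theorem stmt17 (n : ℕ) (hn : 1 ≤ n) (p : ℝ) (hp : 0 < p)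
    (φ : Matrix (Fin (2 * n)) (Fin (2 * n)) ℂ → Matrix (Fin (2 * n)) (Fin (2 * n)) ℂ)
    (hmem : ∀ P : Matrix (Fin (2 * n)) (Fin (2 * n)) ℂ,
      Pᴴ = P → P * P = P → P.trace = (n : ℂ) →
      (φ P)ᴴ = φ P ∧ φ P * φ P = φ P ∧ (φ P).trace = (n : ℂ))
    (hsurj : ∀ Q : Matrix (Fin (2 * n)) (Fin (2 * n)) ℂ,
      Qᴴ = Q → Q * Q = Q → Q.trace = (n : ℂ) →
      ∃ P : Matrix (Fin (2 * n)) (Fin (2 * n)) ℂ,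
        Pᴴ = P ∧ P * P = P ∧ P.trace = (n : ℂ) ∧ φ P = Q)
    (hiso : ∀ P Q : Matrix (Fin (2 * n)) (Fin (2 * n)) ℂ,
      Pᴴ = P → P * P = P → P.trace = (n : ℂ) →
      Qᴴ = Q → Q * Q = Q → Q.trace = (n : ℂ) →
      lpnorm p (φ P - φ Q) = lpnorm p (P - Q)) :
    ∃ W ∈ Matrix.unitaryGroup (Fin (2 * n)) ℂ,
      (∀ P : Matrix (Fin (2 * n)) (Fin (2 * n)) ℂ,
        Pᴴ = P → P * P = P → P.trace = (n : ℂ) → φ P = W * P * Wᴴ) ∨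
      (∀ P : Matrix (Fin (2 * n)) (Fin (2 * n)) ℂ,
        Pᴴ = P → P * P = P → P.trace = (n : ℂ) → φ P = W * Pᵀ * Wᴴ) ∨
      (∀ P : Matrix (Fin (2 * n)) (Fin (2 * n)) ℂ,
        Pᴴ = P → P * P = P → P.trace = (n : ℂ) → φ P = 1 - W * P * Wᴴ) ∨
      (∀ P : Matrix (Fin (2 * n)) (Fin (2 * n)) ℂ,
        Pᴴ = P → P * P = P → P.trace = (n : ℂ) → φ P = 1 - W * Pᵀ * Wᴴ) := by
  set f : Half (Fin (2 * n)) → Half (Fin (2 * n)) := fun P =>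
    ⟨φ P.1, isHalf_iff.mpr (hmem P.1 (isHalf_iff.mp P.2).1 (isHalf_iff.mp P.2).2.1
      (isHalf_iff.mp P.2).2.2)⟩
  have hf : Function.Surjective f := by
    rintro ⟨Q, hQ⟩
    obtain ⟨h1, h2, h3⟩ := isHalf_iff.mp hQ
    obtain ⟨P, h4, h5, h6, h7⟩ := hsurj Q h1 h2 h3
    exact ⟨⟨P, isHalf_iff.mpr ⟨h4, h5, h6⟩⟩, Subtype.ext h7⟩
  have hne : Nonempty (Fin (2 * n)) := ⟨⟨0, by omega⟩⟩
  have hdp : ∀ P Q, dp p (f P).1 (f Q).1 = dp p P.1 Q.1 := by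
    intro P Q
    obtain ⟨h1, h2, h3⟩ := isHalf_iff.mp P.2
    obtain ⟨h4, h5, h6⟩ := isHalf_iff.mp Q.2
    exact dp_eq_of_lpnorm_eq hp (f P).2.herm (f Q).2.herm h1 h4
      (hiso P.1 Q.1 h1 h2 h3 h4 h5 h6)
  obtain ⟨W, hW, h⟩ := exists_unitary_of_dp_eq (Fintype.card_fin _) hn hp hf hdp
  refine ⟨W, hW, ?_⟩
  rcases h with h | h | h | h
  · exact Or.inl fun P h1 h2 h3 => h ⟨P, isHalf_iff.mpr ⟨h1, h2, h3⟩⟩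
  · exact Or.inr (Or.inl fun P h1 h2 h3 => h ⟨P, isHalf_iff.mpr ⟨h1, h2, h3⟩⟩)
  · exact Or.inr (Or.inr (Or.inl fun P h1 h2 h3 => h ⟨P, isHalf_iff.mpr ⟨h1, h2, h3⟩⟩))
  · exact Or.inr (Or.inr (Or.inr fun P h1 h2 h3 => h ⟨P, isHalf_iff.mpr ⟨h1, h2, h3⟩⟩))
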